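/- arXiv:1706.06928 — 3 statements merged into one kernel-verified Lean document; each statement's English description precedes it below -/
import Mathlib

section
/- Let N ≥ 2 and let u : ℝ^N → ℝ be a function of class C^N, not identically zero, such that u and all its partial derivatives up to order N are Lebesgue integrable on ℝ^N. Then the inequality is strict: ‖u‖_∞ < (√(ℓ_N) · ω_{N−1})^{−1} ∫_{ℝ^N} |∇^N u(x)| dx. In particular, no nonzero function in this class attains equality in the optimal Sobolev embedding inequality. -/
/-!
The field `|x|^N ∇^N log |x|` is equivariant under rotations and homogeneous of degree `0`, so it
has constant length `√ℓ_N`. An equivariant vector field of degree `1 - N` is a multiple of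
`|x|^{-N} x`, hence divergence free; integrating `⟨∇^N u, |x|^N ∇^N log |x|⟩` by parts down to a
first order expression in `u` therefore gives exactly `-ℓ_N ω_{N-1} u 0`, and Cauchy–Schwarz yields
the sharp bound for `|u 0|`. By translation it holds at every point, and applied to cut-offs of `u`
it shows that `u` vanishes at infinity, so that `|u|` attains its supremum.

Equality at the origin forces `∇^N u` to be parallel to `∇^N log |x|` everywhere. On a plane through
the origin `log |x|` is harmonic, so the restriction `g` of `u` satisfies `∇^{N-2} Δ g = 0`. Its
differences `g (· + a) - g` satisfy the same equation with `N` lowered by one and also vanish at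
infinity, so descending to Liouville's theorem gives `g = 0`. Thus the bound is strict wherever
`u ≠ 0`.
-/

open MeasureTheory Metric Filter Matrix

noncomputable section

/-- The mixed partial derivative `∂^m u / ∂x_{i 0} ⋯ ∂x_{i (m-1)} (x)`, realized as the
iterated Fréchet derivative applied to the corresponding standard basis vectors. -/
def mixedPartial (N m : ℕ) (u : EuclideanSpace ℝ (Fin N) → ℝ)
    (i : Fin m → Fin N) (x : EuclideanSpace ℝ (Fin N)) : ℝ :=
  iteratedFDeriv ℝ m u x fun k => EuclideanSpace.single (i k) 1

/-- The Frobenius norm `|∇^m u (x)|` of the tensor of `m`-th order partial derivatives. -/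
def gradNorm (N m : ℕ) (u : EuclideanSpace ℝ (Fin N) → ℝ)
    (x : EuclideanSpace ℝ (Fin N)) : ℝ :=
  Real.sqrt (∑ i : Fin m → Fin N, mixedPartial N m u i x ^ 2)

/-- The function `x ↦ log |x|`. -/
def logNorm (N : ℕ) (x : EuclideanSpace ℝ (Fin N)) : ℝ := Real.log ‖x‖

/-- The constant `ℓ_N = ∑ (∂^N log|x|/∂x_{i_1}⋯∂x_{i_N} (e_1))²`. -/
def ell (N : ℕ) (hN : 0 < N) : ℝ :=
  ∑ i : Fin N → Fin N,
    mixedPartial N N (logNorm N) i (EuclideanSpace.single (⟨0, hN⟩ : Fin N) 1) ^ 2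

/-- `ω_{N-1}`, the surface measure of the unit sphere `𝕊^{N-1} ⊂ ℝ^N`,
expressed as `N` times the volume of the unit ball. -/
def omegaSphere (N : ℕ) : ℝ :=
  N * (volume (ball (0 : EuclideanSpace ℝ (Fin N)) 1)).toReal

open Module
open scoped Topology ContDiff

section Tensors

variable {E : Type*} [NormedAddCommGroup E] [InnerProductSpace ℝ E]

theorem sum_fin_succ_arrow {ι M : Type*} [Fintype ι] [AddCommMonoid M] {k : ℕ}
    (f : (Fin (k + 1) → ι) → M) :
    ∑ i, f i = ∑ j, ∑ i : Fin k → ι, f (Fin.cons j i) := by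
  rw [← Fintype.sum_prod_type' fun j i => f (Fin.cons j i)]
  exact (Fintype.sum_equiv (Fin.consEquiv fun _ => ι) _ _ fun _ => rfl).symm

theorem apply_comp_cons {ι : Type*} {k : ℕ} (b : ι → E) (A : E [×(k + 1)]→L[ℝ] ℝ) (j : ι)
    (i : Fin k → ι) :
    (A fun a => b ((Fin.cons j i : Fin (k + 1) → ι) a)) =
      A.curryLeft (b j) fun a => b (i a) := by
  rw [ContinuousMultilinearMap.curryLeft_apply]
  congr 1
  ext a
  refine Fin.cases ?_ (fun a => ?_) a <;> simp

variable [FiniteDimensional ℝ E]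

theorem sum_orthonormalBasis_apply_apply {W : Type*} [NormedAddCommGroup W] [NormedSpace ℝ W]
    {ι κ : Type*} [Fintype ι] [Fintype κ] (b : OrthonormalBasis ι ℝ E)
    (b' : OrthonormalBasis κ ℝ E) (β : E →L[ℝ] E →L[ℝ] W) :
    ∑ i, β (b i) (b i) = ∑ j, β (b' j) (b' j) := by
  have h := congrArg (TensorProduct.lift ((ContinuousLinearMap.coeLM ℝ).comp β.toLinearMap))
    ((InnerProductSpace.canonicalCovariantTensor_eq_sum E b).symm.trans
      (InnerProductSpace.canonicalCovariantTensor_eq_sum E b'))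
  simp only [map_sum, TensorProduct.lift.tmul] at h
  exact h

variable (E) in
/-- The components of a `k`-tensor in the standard orthonormal basis of `E`. The Frobenius norm of
a tensor is the Euclidean norm of its components. -/
def tensorCoords (k : ℕ) :
    (E [×k]→L[ℝ] ℝ) →L[ℝ] EuclideanSpace ℝ (Fin k → Fin (finrank ℝ E)) :=
  (PiLp.continuousLinearEquiv 2 ℝ fun _ => ℝ).symm.toContinuousLinearMap ∘L
    ContinuousLinearMap.pi fun i =>
      ContinuousMultilinearMap.apply ℝ (fun _ => E) ℝ fun a => stdOrthonormalBasis ℝ E (i a)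

variable (E) in
/-- The Frobenius inner product of `k`-tensors. -/
def frobeniusInner (k : ℕ) : (E [×k]→L[ℝ] ℝ) →L[ℝ] (E [×k]→L[ℝ] ℝ) →L[ℝ] ℝ :=
  (innerSL ℝ).bilinearComp (tensorCoords E k) (tensorCoords E k)

theorem tensorCoords_apply {k : ℕ} (A : E [×k]→L[ℝ] ℝ) (i : Fin k → Fin (finrank ℝ E)) :
    tensorCoords E k A i = A fun a => stdOrthonormalBasis ℝ E (i a) :=
  rfl

theorem tensorCoords_injective (k : ℕ) : Function.Injective (tensorCoords E k) := fun A B h =>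
  ContinuousMultilinearMap.toMultilinearMap_injective <|
    Basis.ext_multilinear (fun _ => (stdOrthonormalBasis ℝ E).toBasis) fun i => by
      simpa [tensorCoords_apply] using congrArg (fun c => c i) h

theorem frobeniusInner_apply {k : ℕ} (A B : E [×k]→L[ℝ] ℝ) :
    frobeniusInner E k A B = inner ℝ (tensorCoords E k A) (tensorCoords E k B) :=
  rfl

theorem frobeniusInner_comm {k : ℕ} (A B : E [×k]→L[ℝ] ℝ) :
    frobeniusInner E k A B = frobeniusInner E k B A :=
  real_inner_comm (tensorCoords E k B) (tensorCoords E k A)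

theorem frobeniusInner_self {k : ℕ} (A : E [×k]→L[ℝ] ℝ) :
    frobeniusInner E k A A = ‖tensorCoords E k A‖ ^ 2 :=
  real_inner_self_eq_norm_sq (tensorCoords E k A)

theorem frobeniusInner_eq_sum_stdOrthonormalBasis {k : ℕ} (A B : E [×k]→L[ℝ] ℝ) :
    frobeniusInner E k A B = ∑ i : Fin k → Fin (finrank ℝ E),
      (A fun a => stdOrthonormalBasis ℝ E (i a)) * B fun a => stdOrthonormalBasis ℝ E (i a) := by
  simp only [frobeniusInner_apply, PiLp.inner_apply, tensorCoords_apply, RCLike.inner_apply,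
    conj_trivial, mul_comm]

theorem frobeniusInner_succ {k : ℕ} (A B : E [×(k + 1)]→L[ℝ] ℝ) :
    frobeniusInner E (k + 1) A B = ∑ j, frobeniusInner E k
      (A.curryLeft (stdOrthonormalBasis ℝ E j)) (B.curryLeft (stdOrthonormalBasis ℝ E j)) := by
  simp only [frobeniusInner_eq_sum_stdOrthonormalBasis, sum_fin_succ_arrow, apply_comp_cons]

theorem frobeniusInner_eq_sum {ι : Type*} [Fintype ι] (b : OrthonormalBasis ι ℝ E) {k : ℕ}
    (A B : E [×k]→L[ℝ] ℝ) :
    frobeniusInner E k A B = ∑ i : Fin k → ι, (A fun a => b (i a)) * B fun a => b (i a) := by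
  induction k with
  | zero =>
    simp only [frobeniusInner_eq_sum_stdOrthonormalBasis, Fintype.sum_unique]
    congr! 3
  | succ k ih =>
    simp only [frobeniusInner_succ, sum_fin_succ_arrow, apply_comp_cons, ← ih]
    exact sum_orthonormalBasis_apply_apply _ b
      ((frobeniusInner E k).bilinearComp A.curryLeft B.curryLeft)

theorem frobeniusInner_compContinuousLinearMap (R : E ≃ₗᵢ[ℝ] E) {k : ℕ} (A B : E [×k]→L[ℝ] ℝ) :
    frobeniusInner E k (A.compContinuousLinearMap fun _ => (R : E →L[ℝ] E))
      (B.compContinuousLinearMap fun _ => (R : E →L[ℝ] E)) = frobeniusInner E k A B := by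
  rw [frobeniusInner_eq_sum_stdOrthonormalBasis,
    frobeniusInner_eq_sum ((stdOrthonormalBasis ℝ E).map R) A B]
  rfl

end Tensors

section IsotropicFields

variable {E : Type*} [NormedAddCommGroup E]

theorem fderiv_apply_self_of_homogeneous {W : Type*} [NormedAddCommGroup W] [NormedSpace ℝ W]
    [NormedSpace ℝ E] {f : E → W} {m : ℤ} {x : E} (hf : DifferentiableAt ℝ f x)
    (hom : ∀ t : ℝ, 0 < t → f (t • x) = t ^ m • f x) :
    fderiv ℝ f x x = (m : ℝ) • f x := by
  have hray : HasDerivAt (fun t : ℝ => f (t • x)) (fderiv ℝ f x x) 1 := by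
    have hline : HasDerivAt (fun t : ℝ => t • x) x 1 := by
      simpa using (hasDerivAt_id (1 : ℝ)).smul_const x
    rw [← one_smul ℝ x] at hf
    simpa [Function.comp_def] using hf.hasFDerivAt.comp_hasDerivAt (1 : ℝ) hline
  have hpow : HasDerivAt (fun t : ℝ => t ^ m • f x) ((m : ℝ) • f x) 1 := by
    simpa using (hasDerivAt_zpow m (1 : ℝ) (Or.inl one_ne_zero)).smul_const (f x)
  exact hray.unique <| hpow.congr_of_eventuallyEq <|
    (lt_mem_nhds one_pos).mono fun t ht => hom t ht

variable [InnerProductSpace ℝ E]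

theorem contDiffAt_norm_zpow (m : ℤ) {x : E} (hx : x ≠ 0) {n : ℕ∞} :
    ContDiffAt ℝ n (fun y : E => ‖y‖ ^ m) x :=
  have hpow : AnalyticAt ℝ (fun t : ℝ => t ^ m) ‖x‖ :=
    analyticAt_id.fun_zpow (norm_ne_zero_iff.2 hx)
  hpow.contDiffAt.comp x (contDiffAt_norm ℝ hx)

variable (E) in
/-- Currying the first argument of a tensor, as a continuous linear map. -/
def curryLeftL (k : ℕ) : (E [×(k + 1)]→L[ℝ] ℝ) →L[ℝ] E →L[ℝ] E [×k]→L[ℝ] ℝ :=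
  (continuousMultilinearCurryLeftEquiv ℝ (fun _ : Fin (k + 1) => E)
    ℝ).toContinuousLinearEquiv.toContinuousLinearMap

theorem hasFDerivAt_curryLeft {k : ℕ} {F : E → E [×(k + 1)]→L[ℝ] ℝ}
    {F' : E →L[ℝ] E [×(k + 1)]→L[ℝ] ℝ} {x : E} (hF : HasFDerivAt F F' x) :
    HasFDerivAt (fun y => (F y).curryLeft) (curryLeftL E k ∘L F') x :=
  HasFDerivAt.comp (g := curryLeftL E k) x (ContinuousLinearMap.hasFDerivAt _) hF

theorem contDiffAt_curryLeft {k : ℕ} {F : E → E [×(k + 1)]→L[ℝ] ℝ} {n : WithTop ℕ∞} {x : E}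
    (hF : ContDiffAt ℝ n F x) : ContDiffAt ℝ n (fun y => (F y).curryLeft) x :=
  ContDiffAt.comp (g := curryLeftL E k) x (ContinuousLinearMap.contDiff _).contDiffAt hF

/-- The gradient of a `k`-tensor field, with the direction of differentiation as the first
argument. -/
def tensorGradient {k : ℕ} (F : E → E [×k]→L[ℝ] ℝ) (x : E) : E [×(k + 1)]→L[ℝ] ℝ :=
  (fderiv ℝ F x).uncurryLeft

/-- A tensor field is isotropic of degree `m` if it is smooth away from the origin, positively
homogeneous of degree `m`, and equivariant under the linear isometries. No condition is imposed at
the origin. -/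
structure IsIsotropic {k : ℕ} (m : ℤ) (F : E → E [×k]→L[ℝ] ℝ) : Prop where
  contDiffAt {x : E} : x ≠ 0 → ContDiffAt ℝ ∞ F x
  map_smul {x : E} {t : ℝ} : x ≠ 0 → 0 < t → F (t • x) = t ^ m • F x
  map_isometry (R : E ≃ₗᵢ[ℝ] E) {x : E} : x ≠ 0 →
    (F (R x)).compContinuousLinearMap (fun _ => (R : E →L[ℝ] E)) = F x

theorem tensorGradient_iteratedFDeriv (k : ℕ) (u : E → ℝ) :
    tensorGradient (iteratedFDeriv ℝ k u) = iteratedFDeriv ℝ (k + 1) u :=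
  rfl

namespace IsIsotropic

variable {k : ℕ} {m : ℤ} {F : E → E [×k]→L[ℝ] ℝ}

theorem differentiableAt (hF : IsIsotropic m F) {x : E} (hx : x ≠ 0) : DifferentiableAt ℝ F x :=
  (hF.contDiffAt hx).differentiableAt (by simp)

theorem norm_zpow_smul (hF : IsIsotropic m F) (n : ℤ) :
    IsIsotropic (n + m) fun x => ‖x‖ ^ n • F x where
  contDiffAt hx := (contDiffAt_norm_zpow n hx).smul (hF.contDiffAt hx)
  map_smul {x t} hx ht := by
    rw [hF.map_smul hx ht, norm_smul, Real.norm_of_nonneg ht.le, mul_zpow, zpow_add₀ ht.ne']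
    module
  map_isometry R {x} hx := by
    rw [R.norm_map, ← hF.map_isometry R hx]
    rfl

theorem gradient (hF : IsIsotropic m F) : IsIsotropic (m - 1) (tensorGradient F) where
  contDiffAt hx :=
    (continuousMultilinearCurryLeftEquiv ℝ (fun _ => E) ℝ).symm.contDiff.contDiffAt.comp _
      ((hF.contDiffAt hx).fderiv_right (by simp))
  map_smul {x t} hx ht := by
    have h : (fun y => F (t • y)) =ᶠ[𝓝 x] fun y => t ^ m • F y :=
      (eventually_ne_nhds hx).mono fun y hy => hF.map_smul hy ht
    have h' := h.fderiv_eq (𝕜 := ℝ)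
    rw [fderiv_comp_smul, fderiv_fun_const_smul (hF.differentiableAt hx)] at h'
    have h'' : fderiv ℝ F (t • x) = t ^ (m - 1) • fderiv ℝ F x := by
      rw [zpow_sub_one₀ ht.ne', mul_comm, mul_smul, ← h', inv_smul_smul₀ ht.ne']
    rw [tensorGradient, h'']
    rfl
  map_isometry R {x} hx := by
    have hRx : R x ≠ 0 := by simpa using hx
    have h : (fun y => (F (R y)).compContinuousLinearMap fun _ => (R : E →L[ℝ] E)) =ᶠ[𝓝 x] F :=
      (eventually_ne_nhds hx).mono fun y hy => hF.map_isometry R hy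
    have hchain := (ContinuousMultilinearMap.compContinuousLinearMapL (F := ℝ)
      fun _ : Fin k => (R : E →L[ℝ] E)).hasFDerivAt.comp x
      ((hF.differentiableAt hRx).hasFDerivAt.comp x (R : E →L[ℝ] E).hasFDerivAt)
    have h' := h.fderiv_eq.symm.trans hchain.fderiv
    rw [tensorGradient, tensorGradient, h']
    rfl

end IsIsotropic

theorem covector_apply_eq_zero_of_inner_eq_zero {G : E → E →L[ℝ] ℝ}
    (equiv : ∀ (R : E ≃ₗᵢ[ℝ] E) {x : E} (v : E), x ≠ 0 → G (R x) (R v) = G x v)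
    {x v : E} (hx : x ≠ 0) (hv : inner ℝ x v = 0) : G x v = 0 := by
  have hfix : (Submodule.span ℝ {v})ᗮ.reflection x = x :=
    Submodule.reflection_mem_subspace_eq_self
      (Submodule.mem_orthogonal_singleton_iff_inner_left.2 hv)
  have h := equiv (Submodule.span ℝ {v})ᗮ.reflection v hx
  rw [hfix, Submodule.reflection_orthogonalComplement_singleton_eq_neg, map_neg] at h
  linarith

theorem exists_linearIsometryEquiv_apply_eq {x y : E} (h : ‖x‖ = ‖y‖) :
    ∃ R : E ≃ₗᵢ[ℝ] E, R x = y :=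
  ⟨_, Submodule.reflection_sub h⟩

theorem isotropic_covector_eq {m : ℤ} {G : E → E →L[ℝ] ℝ}
    (hom : ∀ {x : E} {t : ℝ}, x ≠ 0 → 0 < t → G (t • x) = t ^ m • G x)
    (equiv : ∀ (R : E ≃ₗᵢ[ℝ] E) {x : E} (v : E), x ≠ 0 → G (R x) (R v) = G x v)
    {e x : E} (he : ‖e‖ = 1) (hx : x ≠ 0) :
    G x = (G e e * ‖x‖ ^ (m - 1)) • innerSL ℝ x := by
  have hx0 : ‖x‖ ≠ 0 := norm_ne_zero_iff.2 hx
  have he0 : e ≠ 0 := norm_ne_zero_iff.1 (he.trans_ne one_ne_zero)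
  have hxe : x = ‖x‖ • (‖x‖⁻¹ • x) := (smul_inv_smul₀ hx0 x).symm
  obtain ⟨R, hR⟩ := exists_linearIsometryEquiv_apply_eq (x := e) (y := ‖x‖⁻¹ • x)
    (by simp [he, norm_smul, hx0])
  have hradial : G x x = ‖x‖ ^ (m + 1) * G e e := by
    have hy : ‖x‖⁻¹ • x ≠ 0 := smul_ne_zero (inv_ne_zero hx0) hx
    calc G x x = G (‖x‖ • (‖x‖⁻¹ • x)) (‖x‖ • (‖x‖⁻¹ • x)) := by rw [← hxe]
      _ = ‖x‖ ^ (m + 1) * G e e := by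
        rw [hom hy (norm_pos_iff.2 hx), map_smul, ← hR]
        simp only [_root_.smul_apply, equiv R e he0, smul_eq_mul, zpow_add_one₀ hx0]
        ring
  ext v
  have hdecomp := covector_apply_eq_zero_of_inner_eq_zero equiv hx
    (v := v - (inner ℝ x v / ‖x‖ ^ 2) • x) (by
      rw [inner_sub_right, inner_smul_right, real_inner_self_eq_norm_sq]
      field_simp
      ring)
  rw [map_sub, map_smul, hradial, sub_eq_zero] at hdecomp
  rw [hdecomp, _root_.smul_apply, innerSL_apply_apply, smul_eq_mul, smul_eq_mul,
    zpow_add_one₀ hx0, zpow_sub_one₀ hx0]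
  field_simp

theorem IsIsotropic.apply_fin_one {m : ℤ} {F : E → E [×1]→L[ℝ] ℝ} (hF : IsIsotropic m F) {e x : E}
    (he : ‖e‖ = 1) (hx : x ≠ 0) (v : Fin 1 → E) :
    F x v = (F e fun _ => e) * ‖x‖ ^ (m - 1) * inner ℝ x (v 0) := by
  have h := isotropic_covector_eq (m := m)
    (G := fun x => (ContinuousMultilinearMap.ofSubsingleton ℝ E ℝ (0 : Fin 1)).symm (F x))
    (fun {x t} hx ht => ?_) (fun R x v hx => ?_) he hx
  · rw [show v = fun _ => v 0 from funext fun i => congrArg v (Subsingleton.elim i 0)]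
    exact DFunLike.congr_fun h (v 0)
  · simp only [hF.map_smul hx ht]
    rfl
  · simp only [← hF.map_isometry R hx]
    rfl

variable [FiniteDimensional ℝ E]
variable {W : Type*} [NormedAddCommGroup W] [NormedSpace ℝ W]

theorem IsIsotropic.exists_norm_le {k : ℕ} {m : ℤ} {F : E → E [×k]→L[ℝ] ℝ}
    (hF : IsIsotropic m F) : ∃ C, 0 ≤ C ∧ ∀ x ≠ 0, ‖F x‖ ≤ C * ‖x‖ ^ m := by
  have hcont : ContinuousOn F (sphere 0 1) := fun x hx =>
    (hF.contDiffAt (ne_zero_of_mem_unit_sphere ⟨x, hx⟩)).continuousAt.continuousWithinAt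
  obtain ⟨C, hC⟩ := (isCompact_sphere (0 : E) 1).exists_bound_of_continuousOn hcont
  refine ⟨max C 0, le_max_right _ _, fun x hx => ?_⟩
  have hx0 : 0 < ‖x‖ := norm_pos_iff.2 hx
  have hunit : ‖x‖⁻¹ • x ∈ sphere (0 : E) 1 := by simp [norm_smul, hx0.ne']
  have hFx : F x = ‖x‖ ^ m • F (‖x‖⁻¹ • x) := by
    rw [← hF.map_smul (ne_zero_of_mem_unit_sphere ⟨_, hunit⟩) hx0, smul_inv_smul₀ hx0.ne']
  rw [hFx, norm_smul, Real.norm_of_nonneg (zpow_nonneg hx0.le m), mul_comm]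
  gcongr
  exact (hC _ hunit).trans (le_max_left _ _)

/-- The divergence of a covector field with values in `W`. The divergence of a tensor field `F`,
contracting the direction of differentiation with the first argument, is obtained for
`G x = (F x).curryLeft`. -/
def divergence (G : E → E →L[ℝ] W) (x : E) : W :=
  ∑ j, fderiv ℝ G x (stdOrthonormalBasis ℝ E j) (stdOrthonormalBasis ℝ E j)

theorem divergence_bilinear {V Z : Type*} [NormedAddCommGroup V] [NormedSpace ℝ V]
    [NormedAddCommGroup Z] [NormedSpace ℝ Z] (B : V →L[ℝ] W →L[ℝ] Z) {a : E → V}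
    {G : E → E →L[ℝ] W} {x : E} (ha : DifferentiableAt ℝ a x) (hG : DifferentiableAt ℝ G x) :
    divergence (fun y => (B (a y)).comp (G y)) x = B (a x) (divergence G x) +
      ∑ j, B (fderiv ℝ a x (stdOrthonormalBasis ℝ E j)) (G x (stdOrthonormalBasis ℝ E j)) := by
  have h := (B.hasFDerivAt.comp x ha.hasFDerivAt).clm_comp hG.hasFDerivAt
  simp only [divergence, map_sum, ← Finset.sum_add_distrib]
  refine Finset.sum_congr rfl fun j _ => ?_
  exact congrArg (fun D => D (stdOrthonormalBasis ℝ E j) (stdOrthonormalBasis ℝ E j)) h.fderiv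

theorem divergence_smul {f : E → ℝ} {G : E → E →L[ℝ] W} {x : E}
    (hf : DifferentiableAt ℝ f x) (hG : DifferentiableAt ℝ G x) :
    divergence (fun y => f y • G y) x = f x • divergence G x +
      ∑ j, fderiv ℝ f x (stdOrthonormalBasis ℝ E j) • G x (stdOrthonormalBasis ℝ E j) :=
  divergence_bilinear (ContinuousLinearMap.lsmul ℝ ℝ) hf hG

theorem divergence_frobeniusInner {k : ℕ} {A : E → E [×k]→L[ℝ] ℝ}
    {F : E → E [×(k + 1)]→L[ℝ] ℝ} {x : E} (hA : DifferentiableAt ℝ A x)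
    (hF : DifferentiableAt ℝ F x) :
    divergence (fun y => (frobeniusInner E k (A y)).comp (F y).curryLeft) x =
      frobeniusInner E k (A x) (divergence (fun y => (F y).curryLeft) x) +
        frobeniusInner E (k + 1) (tensorGradient A x) (F x) := by
  rw [divergence_bilinear _ hA (hasFDerivAt_curryLeft hF.hasFDerivAt).differentiableAt,
    frobeniusInner_succ]
  rfl

theorem divergence_smul_innerSL {f : E → ℝ} {x : E} (hf : DifferentiableAt ℝ f x) :
    divergence (fun y => f y • innerSL ℝ y) x = finrank ℝ E * f x + fderiv ℝ f x x := by
  rw [divergence_smul hf (innerSL ℝ).differentiableAt]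
  have hself : divergence (innerSL ℝ : E → E →L[ℝ] ℝ) x = finrank ℝ E := by
    have hfderiv := ((innerSL ℝ : E →L[ℝ] E →L[ℝ] ℝ).hasFDerivAt (x := x)).fderiv
    have hterm (j) : fderiv ℝ (innerSL ℝ : E → E →L[ℝ] ℝ) x (stdOrthonormalBasis ℝ E j)
        (stdOrthonormalBasis ℝ E j) = 1 := by
      rw [hfderiv]
      exact (stdOrthonormalBasis ℝ E).inner_eq_one j
    simp [divergence, hterm]
  have hradial : ∑ j, fderiv ℝ f x (stdOrthonormalBasis ℝ E j) •
      innerSL ℝ x (stdOrthonormalBasis ℝ E j) = fderiv ℝ f x x := by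
    have hx := congrArg (fderiv ℝ f x) ((stdOrthonormalBasis ℝ E).sum_repr' x)
    simp only [map_sum, map_smul, smul_eq_mul] at hx
    rw [← hx]
    refine Finset.sum_congr rfl fun j _ => ?_
    rw [innerSL_apply_apply, smul_eq_mul, mul_comm, real_inner_comm]
  rw [hself, hradial, smul_eq_mul, mul_comm]

theorem divergence_curryLeft {k : ℕ} {F : E → E [×(k + 1)]→L[ℝ] ℝ} {x : E}
    (hF : DifferentiableAt ℝ F x) :
    divergence (fun y => (F y).curryLeft) x = ∑ j,
      ((tensorGradient F x).curryLeft (stdOrthonormalBasis ℝ E j)).curryLeft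
        (stdOrthonormalBasis ℝ E j) := by
  have h := hasFDerivAt_curryLeft hF.hasFDerivAt
  exact Finset.sum_congr rfl fun j _ => congrArg
    (fun D => D (stdOrthonormalBasis ℝ E j) (stdOrthonormalBasis ℝ E j)) h.fderiv

theorem IsIsotropic.divergence_curryLeft {k : ℕ} {m : ℤ} {F : E → E [×(k + 1)]→L[ℝ] ℝ}
    (hF : IsIsotropic m F) : IsIsotropic (m - 1) (divergence fun y => (F y).curryLeft) where
  contDiffAt {x} hx := by
    have hG' := (contDiffAt_curryLeft (hF.contDiffAt hx)).fderiv_right (m := ∞) (by simp)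
    exact ContDiffAt.sum fun j _ =>
      (hG'.clm_apply contDiffAt_const).clm_apply contDiffAt_const
  map_smul {x t} hx ht := by
    have htx : t • x ≠ 0 := smul_ne_zero ht.ne' hx
    simp only [_root_.divergence_curryLeft (hF.differentiableAt hx),
      _root_.divergence_curryLeft (hF.differentiableAt htx), hF.gradient.map_smul hx ht,
      Finset.smul_sum]
    rfl
  map_isometry R {x} hx := by
    have hRx : R x ≠ 0 := by simpa using hx
    rw [_root_.divergence_curryLeft (hF.differentiableAt hx),
      _root_.divergence_curryLeft (hF.differentiableAt hRx), ← hF.gradient.map_isometry R hx]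
    have htrace := sum_orthonormalBasis_apply_apply (stdOrthonormalBasis ℝ E)
      ((stdOrthonormalBasis ℝ E).map R) (curryLeftL E k ∘L (tensorGradient F (R x)).curryLeft)
    ext v
    have h := congrArg (fun A : E [×k]→L[ℝ] ℝ => A fun a => R (v a)) htrace
    simp only [_root_.sum_apply] at h
    simp only [ContinuousMultilinearMap.compContinuousLinearMap_apply, _root_.sum_apply]
    refine h.trans (Finset.sum_congr rfl fun j _ => ?_)
    change tensorGradient F (R x) (Fin.cons _ (Fin.cons _ _)) =
      tensorGradient F (R x) fun a => R ((Fin.cons _ (Fin.cons _ _) : Fin (k + 2) → E) a)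
    exact congrArg _ (funext (Fin.cases rfl (Fin.cases rfl fun _ => rfl)))

theorem divergence_isotropic_covector_eq_zero {G : E → E →L[ℝ] ℝ}
    (hom : ∀ {x : E} {t : ℝ}, x ≠ 0 → 0 < t → G (t • x) = t ^ (1 - finrank ℝ E : ℤ) • G x)
    (equiv : ∀ (R : E ≃ₗᵢ[ℝ] E) {x : E} (v : E), x ≠ 0 → G (R x) (R v) = G x v)
    {x : E} (hx : x ≠ 0) : divergence G x = 0 := by
  set e := ‖x‖⁻¹ • x
  set f : E → ℝ := fun y => G e e * ‖y‖ ^ (-finrank ℝ E : ℤ)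
  have he : ‖e‖ = 1 := by simp [e, norm_smul, hx]
  have hG : G =ᶠ[𝓝 x] fun y => f y • innerSL ℝ y := (eventually_ne_nhds hx).mono fun y hy => by
    rw [isotropic_covector_eq hom equiv he hy]
    simp only [f, sub_sub_cancel_left]
  have hf : DifferentiableAt ℝ f x :=
    ((contDiffAt_norm_zpow (n := 1) _ hx).differentiableAt one_ne_zero).const_mul _
  have heuler : fderiv ℝ f x x = ((-finrank ℝ E : ℤ) : ℝ) • f x :=
    fderiv_apply_self_of_homogeneous hf fun t ht => by
      simp only [f, norm_smul, Real.norm_of_nonneg ht.le, mul_zpow, smul_eq_mul]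
      ring
  have hdiv : divergence G x = divergence (fun y => f y • innerSL ℝ y) x := by
    simp only [divergence, hG.fderiv_eq]
  rw [hdiv, divergence_smul_innerSL hf, heuler]
  push_cast
  ring

theorem IsIsotropic.frobeniusInner_gradient_add_divergence_eq_zero {k : ℕ} {m n : ℤ}
    {A : E → E [×k]→L[ℝ] ℝ} {F : E → E [×(k + 1)]→L[ℝ] ℝ} (hA : IsIsotropic m A)
    (hF : IsIsotropic n F) (hmn : m + n = 1 - finrank ℝ E) {x : E} (hx : x ≠ 0) :
    frobeniusInner E k (A x) (divergence (fun y => (F y).curryLeft) x) +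
        frobeniusInner E (k + 1) (tensorGradient A x) (F x) = 0 := by
  rw [← divergence_frobeniusInner (hA.differentiableAt hx) (hF.differentiableAt hx)]
  refine divergence_isotropic_covector_eq_zero (fun {x t} hx ht => ?_) (fun R x v hx => ?_) hx
  · rw [hA.map_smul hx ht, hF.map_smul hx ht, ← hmn, zpow_add₀ ht.ne']
    ext v
    have hcurry : (t ^ n • F x).curryLeft v = t ^ n • (F x).curryLeft v := rfl
    simp [hcurry, mul_assoc]
  · have hcurry : ((F (R x)).curryLeft (R v)).compContinuousLinearMap
        (fun _ => (R : E →L[ℝ] E)) = (F x).curryLeft v := by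
      rw [← hF.map_isometry R hx]
      ext w
      exact congrArg (F (R x)) (funext <| Fin.cases rfl fun _ => rfl)
    simp only [ContinuousLinearMap.comp_apply]
    rw [← frobeniusInner_compContinuousLinearMap R, hcurry, hA.map_isometry R hx]

end IsotropicFields

section LogNorm

variable {E : Type*} [NormedAddCommGroup E] [InnerProductSpace ℝ E]

theorem contDiffAt_log_norm {x : E} (hx : x ≠ 0) {n : ℕ∞} :
    ContDiffAt ℝ n (fun y : E => Real.log ‖y‖) x :=
  (contDiffAt_norm ℝ hx).log (norm_ne_zero_iff.2 hx)

theorem fderiv_log_norm {x : E} (hx : x ≠ 0) :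
    fderiv ℝ (fun y : E => Real.log ‖y‖) x = (‖x‖ ^ 2)⁻¹ • innerSL ℝ x := by
  have hlog : (fun y : E => Real.log ‖y‖) = fun y => 2⁻¹ * Real.log (‖y‖ ^ 2) := by
    ext y
    rw [Real.log_pow]
    push_cast
    ring
  have hx2 : ‖x‖ ^ 2 ≠ 0 := pow_ne_zero 2 (norm_ne_zero_iff.2 hx)
  rw [hlog, ((((hasStrictFDerivAt_norm_sq x).hasFDerivAt).log hx2).const_mul 2⁻¹).fderiv,
    smul_comm, ofNat_smul_eq_nsmul, ← Nat.cast_smul_eq_nsmul ℝ]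
  congr 1
  module

theorem iteratedFDeriv_one_log_norm_apply {x : E} (hx : x ≠ 0) (v : Fin 1 → E) :
    iteratedFDeriv ℝ 1 (fun y : E => Real.log ‖y‖) x v = (‖x‖ ^ 2)⁻¹ * inner ℝ x (v 0) := by
  rw [iteratedFDeriv_one_apply, fderiv_log_norm hx]
  rfl

theorem isIsotropic_iteratedFDeriv_log_norm (k : ℕ) :
    IsIsotropic (-(k + 1)) (iteratedFDeriv ℝ (k + 1) fun y : E => Real.log ‖y‖) := by
  induction k with
  | zero =>
    refine ⟨fun hx => (contDiffAt_log_norm hx).iteratedFDeriv_right (n := ∞) (by simp),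
      fun {x t} hx ht => ?_, fun R x hx => ?_⟩
    · ext v
      rw [iteratedFDeriv_one_log_norm_apply (smul_ne_zero ht.ne' hx), _root_.smul_apply,
        iteratedFDeriv_one_log_norm_apply hx, norm_smul, Real.norm_of_nonneg ht.le,
        real_inner_smul_left, Nat.cast_zero, zero_add, _root_.zpow_neg_one, smul_eq_mul]
      field_simp
    · ext v
      rw [ContinuousMultilinearMap.compContinuousLinearMap_apply,
        iteratedFDeriv_one_log_norm_apply (by simpa using hx),
        iteratedFDeriv_one_log_norm_apply hx, R.norm_map]
      exact congrArg _ (R.inner_map_map x (v 0))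
  | succ k ih =>
    have h := ih.gradient
    rw [tensorGradient_iteratedFDeriv] at h
    convert h using 1
    push_cast
    ring

theorem iteratedFDeriv_log_norm_ne_zero (k : ℕ) {x : E} (hx : x ≠ 0) :
    iteratedFDeriv ℝ (k + 1) (fun y : E => Real.log ‖y‖) x ≠ 0 := by
  induction k with
  | zero =>
    intro h
    have hself := iteratedFDeriv_one_log_norm_apply hx fun _ => x
    rw [h, real_inner_self_eq_norm_sq, inv_mul_cancel₀ (by simpa using hx)] at hself
    exact zero_ne_one hself
  | succ k ih =>
    intro h
    have hF := isIsotropic_iteratedFDeriv_log_norm (E := E) k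
    have heuler : (iteratedFDeriv ℝ (k + 2) (fun y : E => Real.log ‖y‖) x).curryLeft x =
        ((-(k + 1) : ℤ) : ℝ) • iteratedFDeriv ℝ (k + 1) (fun y : E => Real.log ‖y‖) x :=
      fderiv_apply_self_of_homogeneous (hF.differentiableAt hx) fun t ht => hF.map_smul hx ht
    have hzero : (0 : E [×(k + 2)]→L[ℝ] ℝ).curryLeft x = 0 := rfl
    rw [h, hzero, eq_comm, smul_eq_zero] at heuler
    refine heuler.elim (fun hk => ?_) ih
    push_cast at hk
    linarith [k.cast_nonneg (α := ℝ)]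

end LogNorm

section PolarCoordinates

theorem integrable_volumeIoiPow_iff {n : ℕ} {f : ℝ → ℝ} :
    Integrable (fun r : Set.Ioi (0 : ℝ) => f r) (Measure.volumeIoiPow n) ↔
      IntegrableOn (fun r => r ^ n * f r) (Set.Ioi 0) := by
  rw [Measure.volumeIoiPow, integrable_withDensity_iff_integrable_smul' (by fun_prop) (by simp),
    integrableOn_iff_comap_subtypeVal measurableSet_Ioi]
  refine integrable_congr (.of_forall fun r => ?_)
  simp only [Function.comp_apply, ENNReal.toReal_ofReal (pow_nonneg r.2.out.le n), smul_eq_mul]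

theorem integral_volumeIoiPow (n : ℕ) (f : ℝ → ℝ) :
    ∫ r : Set.Ioi (0 : ℝ), f r ∂Measure.volumeIoiPow n = ∫ r in Set.Ioi 0, r ^ n * f r := by
  have hdensity : Measurable fun r : Set.Ioi (0 : ℝ) => (r.1 ^ n).toNNReal :=
    (measurable_subtype_coe.pow_const n).real_toNNReal
  rw [← integral_subtype_comap measurableSet_Ioi fun r => r ^ n * f r]
  refine (integral_withDensity_eq_integral_smul hdensity _).trans ?_
  refine integral_congr_ae (.of_forall fun r => ?_)
  simp only [NNReal.smul_def, Real.coe_toNNReal _ (pow_nonneg r.2.out.le n), smul_eq_mul]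

variable {E : Type*} [NormedAddCommGroup E] [NormedSpace ℝ E]

theorem integral_Ioi_fderiv_ray {u : E → ℝ} (hu : ContDiff ℝ 1 u) {θ : E} {n : ℕ}
    (hint : IntegrableOn (fun r : ℝ => r ^ n * u (r • θ)) (Set.Ioi 0))
    (hint' : IntegrableOn (fun r : ℝ => fderiv ℝ u (r • θ) θ) (Set.Ioi 0)) :
    ∫ r in Set.Ioi (0 : ℝ), fderiv ℝ u (r • θ) θ = -u 0 := by
  have hderiv (r : ℝ) : HasDerivAt (fun s : ℝ => u (s • θ)) (fderiv ℝ u (r • θ) θ) r := by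
    have hline : HasDerivAt (fun s : ℝ => s • θ) θ r := by
      simpa using (hasDerivAt_id r).smul_const θ
    exact (hu.differentiable one_ne_zero (r • θ)).hasFDerivAt.comp_hasDerivAt r hline
  have htail : IntegrableOn (fun r : ℝ => u (r • θ)) (Set.Ioi 1) := by
    refine Integrable.mono (hint.mono_set (Set.Ioi_subset_Ioi zero_le_one))
      (hu.continuous.comp (by fun_prop)).aestronglyMeasurable ?_
    filter_upwards [ae_restrict_mem measurableSet_Ioi] with r hr
    rw [norm_mul, norm_pow]
    exact le_mul_of_one_le_left (norm_nonneg _) (one_le_pow₀ (hr.out.le.trans (le_abs_self r)))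
  have hlim : Tendsto (fun r : ℝ => u (r • θ)) atTop (𝓝 0) :=
    tendsto_zero_of_hasDerivAt_of_integrableOn_Ioi (fun r _ => hderiv r)
      (hint'.mono_set (Set.Ioi_subset_Ioi zero_le_one)) htail
  rw [integral_Ioi_of_hasDerivAt_of_tendsto' (fun r _ => hderiv r) hint' hlim, zero_smul,
    zero_sub]

variable [FiniteDimensional ℝ E] [MeasurableSpace E] [BorelSpace E] {μ : Measure E}
  [μ.IsAddHaarMeasure]

variable {f : E → ℝ}

theorem integrable_prod_toSphere (hf : Integrable f μ) :
    Integrable (fun p : sphere (0 : E) 1 × Set.Ioi (0 : ℝ) => f (p.2.1 • p.1.1))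
      (μ.toSphere.prod (Measure.volumeIoiPow (finrank ℝ E - 1))) := by
  rw [← μ.measurePreserving_homeomorphUnitSphereProd.integrable_comp_emb
    (Homeomorph.measurableEmbedding _)]
  have h := (integrableOn_iff_comap_subtypeVal (measurableSet_singleton (0 : E)).compl).1
    hf.integrableOn
  refine h.congr (.of_forall fun x => ?_)
  simp [smul_smul, norm_ne_zero_iff.2 x.2]

theorem ae_toSphere_integrableOn (hf : Integrable f μ) :
    ∀ᵐ θ ∂μ.toSphere,
      IntegrableOn (fun r => r ^ (finrank ℝ E - 1) * f (r • θ.1)) (Set.Ioi 0) :=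
  (integrable_prod_toSphere hf).prod_right_ae.mono fun θ h =>
    integrable_volumeIoiPow_iff (f := fun r => f (r • θ.1)).1 h

theorem integral_eq_integral_toSphere [Nontrivial E] (hf : Integrable f μ) :
    ∫ x, f x ∂μ =
      ∫ θ, (∫ r in Set.Ioi 0, r ^ (finrank ℝ E - 1) * f (r • θ.1)) ∂μ.toSphere := by
  calc ∫ x, f x ∂μ = ∫ x : ({0}ᶜ : Set E), f x ∂μ.comap (↑) := by
        rw [integral_subtype_comap (measurableSet_singleton _).compl, restrict_compl_singleton]
    _ = ∫ p : sphere (0 : E) 1 × Set.Ioi (0 : ℝ), f (p.2.1 • p.1.1)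
          ∂μ.toSphere.prod (Measure.volumeIoiPow (finrank ℝ E - 1)) := by
        rw [← μ.measurePreserving_homeomorphUnitSphereProd.integral_comp
          (Homeomorph.measurableEmbedding _)]
        refine integral_congr_ae (.of_forall fun x => ?_)
        simp [smul_smul, norm_ne_zero_iff.2 x.2]
    _ = _ := by
        rw [integral_prod _ (integrable_prod_toSphere hf)]
        exact integral_congr_ae (.of_forall fun θ =>
          integral_volumeIoiPow _ fun r => f (r • θ.1))

theorem integral_norm_zpow_mul_fderiv_self [Nontrivial E] {u : E → ℝ} (hu : ContDiff ℝ 1 u)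
    (hint : Integrable u μ)
    (hint' : Integrable (fun x => ‖x‖ ^ (-finrank ℝ E : ℤ) * fderiv ℝ u x x) μ) :
    ∫ x, ‖x‖ ^ (-finrank ℝ E : ℤ) * fderiv ℝ u x x ∂μ = -(μ.toSphere.real Set.univ * u 0) := by
  have hray (θ : sphere (0 : E) 1) {r : ℝ} (hr : r ∈ Set.Ioi 0) :
      r ^ (finrank ℝ E - 1) *
          (‖r • θ.1‖ ^ (-finrank ℝ E : ℤ) * fderiv ℝ u (r • θ.1) (r • θ.1)) =
        fderiv ℝ u (r • θ.1) θ.1 := by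
    have hr0 : r ≠ 0 := hr.out.ne'
    obtain ⟨n, hn⟩ := Nat.exists_eq_add_one.2 (finrank_pos (R := ℝ) (M := E))
    rw [norm_smul, norm_eq_of_mem_sphere, mul_one, Real.norm_of_nonneg hr.out.le, map_smul,
      smul_eq_mul, _root_.zpow_neg, zpow_natCast, hn, Nat.add_sub_cancel, pow_succ]
    field_simp
  rw [integral_eq_integral_toSphere hint']
  have hinner : ∀ᵐ θ ∂μ.toSphere, ∫ r in Set.Ioi 0, r ^ (finrank ℝ E - 1) *
      (‖r • θ.1‖ ^ (-finrank ℝ E : ℤ) * fderiv ℝ u (r • θ.1) (r • θ.1)) = -u 0 := by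
    filter_upwards [ae_toSphere_integrableOn hint, ae_toSphere_integrableOn hint'] with θ h h'
    rw [setIntegral_congr_fun measurableSet_Ioi fun r hr => hray θ hr]
    exact integral_Ioi_fderiv_ray hu h (h'.congr_fun (fun r hr => hray θ hr) measurableSet_Ioi)
  rw [integral_congr_ae hinner, integral_const, smul_eq_mul, mul_neg]

theorem integrableOn_norm_zpow_ball [Nontrivial E] {m : ℤ} (hm : -finrank ℝ E < m) :
    IntegrableOn (fun x : E => ‖x‖ ^ m) (ball 0 1) μ := by
  refine (integrableOn_fun_norm_addHaar μ (f := fun r : ℝ => r ^ m)).2 ?_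
  obtain ⟨n, hn⟩ := Int.eq_ofNat_of_zero_le (show 0 ≤ (finrank ℝ E : ℤ) - 1 + m by linarith)
  have hpow : IntegrableOn (fun r : ℝ => r ^ n) (Set.Ioo 0 1) :=
    (continuous_pow n).integrableOn_Icc.mono_set Set.Ioo_subset_Icc_self
  refine hpow.congr_fun (fun r hr => ?_) measurableSet_Ioo
  simp only [smul_eq_mul, ← zpow_natCast, ← zpow_add₀ hr.1.ne', ← hn, Nat.cast_pred finrank_pos]

theorem integrable_mul_norm_zpow [Nontrivial E] {f : E → ℝ} (hf : Continuous f)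
    (hint : Integrable f μ) {m : ℤ} (hm : -finrank ℝ E < m) (hm0 : m ≤ 0) :
    Integrable (fun x => f x * ‖x‖ ^ m) μ := by
  have hmeas : AEStronglyMeasurable (fun x => f x * ‖x‖ ^ m) μ :=
    hf.aestronglyMeasurable.mul (by fun_prop : Measurable fun x : E => ‖x‖ ^ m).aestronglyMeasurable
  rw [← integrableOn_univ, ← Set.union_compl_self (ball (0 : E) 1), integrableOn_union]
  constructor
  · obtain ⟨C, hC⟩ := (isCompact_closedBall (0 : E) 1).exists_bound_of_continuousOn hf.continuousOn
    refine ((integrableOn_norm_zpow_ball hm).const_mul C).mono' hmeas.restrict ?_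
    filter_upwards [ae_restrict_mem measurableSet_ball] with x hx
    rw [norm_mul, Real.norm_of_nonneg (zpow_nonneg (norm_nonneg x) m)]
    gcongr
    exact hC x (ball_subset_closedBall hx)
  · refine hint.norm.integrableOn.mono' hmeas.restrict ?_
    filter_upwards [ae_restrict_mem measurableSet_ball.compl] with x hx
    have hx1 : 1 ≤ ‖x‖ := by simpa using hx
    rw [norm_mul, Real.norm_of_nonneg (zpow_nonneg (norm_nonneg x) m)]
    exact mul_le_of_le_one_right (norm_nonneg _) (zpow_le_one_of_nonpos₀ hx1 hm0)

end PolarCoordinates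

section PuncturedDivergenceTheorem

theorem integrable_mul_of_zero_notMem_tsupport {E : Type*} [NormedAddCommGroup E]
    [MeasurableSpace E] [BorelSpace E] {μ : Measure E} [IsFiniteMeasureOnCompacts μ] {f g : E → ℝ}
    (hf : Continuous f) (hfc : HasCompactSupport f) (h0 : 0 ∉ tsupport f)
    (hg : ∀ x ≠ 0, ContinuousAt g x) : Integrable (fun x => f x * g x) μ := by
  refine Continuous.integrable_of_hasCompactSupport (continuous_of_tsupport fun x hx => ?_)
    hfc.mul_right
  refine hf.continuousAt.mul (hg x ?_)
  rintro rfl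
  exact h0 (tsupport_mul_subset_left hx)

variable {E : Type*} [NormedAddCommGroup E] [InnerProductSpace ℝ E] [FiniteDimensional ℝ E]

variable (E) in
/-- A smooth bump equal to `1` on the unit ball and supported in the ball of radius `2`. -/
def unitBump : ContDiffBump (0 : E) :=
  ⟨1, 2, one_pos, one_lt_two⟩

/-- A smooth cutoff that vanishes near the origin and near infinity and tends to `1` on the
punctured space as `R → ∞`. -/
def annularCutoff (R : ℝ) (x : E) : ℝ :=
  unitBump E (R⁻¹ • x) - unitBump E (R • x)

theorem contDiff_annularCutoff (R : ℝ) : ContDiff ℝ ∞ (annularCutoff R : E → ℝ) :=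
  ((unitBump E).contDiff.comp (contDiff_const_smul _)).sub
    ((unitBump E).contDiff.comp (contDiff_const_smul _))

theorem hasCompactSupport_annularCutoff {R : ℝ} (hR : 0 < R) :
    HasCompactSupport (annularCutoff R : E → ℝ) :=
  ((unitBump E).hasCompactSupport.comp_smul (inv_ne_zero hR.ne')).sub
    ((unitBump E).hasCompactSupport.comp_smul hR.ne')

theorem zero_notMem_tsupport_annularCutoff (R : ℝ) :
    (0 : E) ∉ tsupport (annularCutoff R : E → ℝ) := by
  have hbump (a : ℝ) : ∀ᶠ x : E in 𝓝 0, unitBump E (a • x) = 1 :=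
    (continuous_const_smul a).tendsto' (0 : E) 0 (smul_zero a) |>.eventually
      (unitBump E).eventuallyEq_one
  rw [notMem_tsupport_iff_eventuallyEq]
  filter_upwards [hbump R⁻¹, hbump R] with x h₁ h₂
  rw [annularCutoff, h₁, h₂, sub_self, Pi.zero_apply]

theorem abs_annularCutoff_le_one (R : ℝ) (x : E) : |annularCutoff R x| ≤ 1 :=
  abs_sub_le_of_nonneg_of_le (unitBump E).nonneg (unitBump E).le_one (unitBump E).nonneg
    (unitBump E).le_one

theorem eventually_annularCutoff_eventuallyEq_one {x : E} (hx : x ≠ 0) :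
    ∀ᶠ R in atTop, (annularCutoff R : E → ℝ) =ᶠ[𝓝 x] fun _ => 1 := by
  have hx0 : 0 < ‖x‖ := norm_pos_iff.2 hx
  filter_upwards [eventually_gt_atTop ‖x‖, eventually_gt_atTop (2 / ‖x‖), eventually_gt_atTop 0]
    with R h₁ h₂ hR
  filter_upwards [continuous_norm.continuousAt.eventually (gt_mem_nhds h₁),
    continuous_norm.continuousAt.eventually
      (lt_mem_nhds ((div_lt_comm₀ hx0 hR).1 h₂))] with y hy₁ hy₂
  have hinner : R⁻¹ • y ∈ closedBall 0 (unitBump E).rIn := by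
    rw [mem_closedBall_zero_iff, norm_smul, norm_inv, Real.norm_of_nonneg hR.le]
    exact (inv_mul_le_one₀ hR).2 hy₁.le
  have houter : (unitBump E).rOut ≤ dist (R • y) 0 := by
    rw [dist_zero_right, norm_smul, Real.norm_of_nonneg hR.le]
    exact ((div_lt_iff₀' hR).1 hy₂).le
  rw [annularCutoff, (unitBump E).one_of_mem_closedBall hinner,
    (unitBump E).zero_of_le_dist houter, sub_zero]

theorem exists_norm_mul_norm_fderiv_annularCutoff_le :
    ∃ C, ∀ (R : ℝ) (x : E), ‖x‖ * ‖fderiv ℝ (annularCutoff R) x‖ ≤ C := by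
  have hcont : Continuous fun x : E => ‖x‖ • fderiv ℝ (unitBump E) x :=
    continuous_norm.smul ((unitBump E).contDiff.continuous_fderiv (n := 1) one_ne_zero)
  have hsupp : HasCompactSupport fun x : E => ‖x‖ • fderiv ℝ (unitBump E) x :=
    ((unitBump E).hasCompactSupport.fderiv ℝ).mono' fun x hx =>
      subset_tsupport _ (right_ne_zero_of_smul hx)
  obtain ⟨C, hC⟩ := hcont.bounded_above_of_compact_support hsupp
  have hscale (a : ℝ) (x : E) : ‖x‖ * ‖a • fderiv ℝ (unitBump E) (a • x)‖ ≤ C := by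
    refine le_trans (le_of_eq ?_) (hC (a • x))
    rw [norm_smul, norm_smul ‖a • x‖, norm_norm, norm_smul]
    ring
  refine ⟨C + C, fun R x => ?_⟩
  have hdiff (a : ℝ) : DifferentiableAt ℝ (fun y : E => unitBump E (a • y)) x :=
    ((unitBump E).contDiff.comp (contDiff_const_smul a)).differentiable
      (n := 1) one_ne_zero x
  have hfderiv : fderiv ℝ (annularCutoff R) x = R⁻¹ • fderiv ℝ (unitBump E) (R⁻¹ • x) -
      R • fderiv ℝ (unitBump E) (R • x) := by
    rw [← fderiv_comp_smul, ← fderiv_comp_smul]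
    exact fderiv_fun_sub (hdiff R⁻¹) (hdiff R)
  calc ‖x‖ * ‖fderiv ℝ (annularCutoff R) x‖
      ≤ ‖x‖ * (‖R⁻¹ • fderiv ℝ (unitBump E) (R⁻¹ • x)‖ + ‖R • fderiv ℝ (unitBump E) (R • x)‖) := by
        rw [hfderiv]
        gcongr
        exact norm_sub_le _ _
    _ ≤ C + C := by
        rw [mul_add]
        exact add_le_add (hscale _ x) (hscale _ x)

variable [MeasurableSpace E] [BorelSpace E] {μ : Measure E} [μ.IsAddHaarMeasure]

theorem integral_mul_divergence_of_zero_notMem_tsupport {χ : E → ℝ} {G : E → E →L[ℝ] ℝ}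
    (hχ : ContDiff ℝ 1 χ) (hχc : HasCompactSupport χ) (h0 : 0 ∉ tsupport χ)
    (hG : ∀ x ≠ 0, ContDiffAt ℝ 1 G x) :
    ∫ x, χ x * divergence G x ∂μ = -∑ j, ∫ x, fderiv ℝ χ x (stdOrthonormalBasis ℝ E j) *
      G x (stdOrthonormalBasis ℝ E j) ∂μ := by
  set b := stdOrthonormalBasis ℝ E
  have hGj (j) (x : E) (hx : x ≠ 0) : ContDiffAt ℝ 1 (fun y => G y (b j)) x :=
    (hG x hx).clm_apply contDiffAt_const
  have hfderiv (j) (x : E) (hx : x ≠ 0) :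
      fderiv ℝ (fun y => G y (b j)) x (b j) = fderiv ℝ G x (b j) (b j) := by
    rw [fderiv_clm_apply ((hG x hx).differentiableAt one_ne_zero) (differentiableAt_const _)]
    simp
  have hχG' (j) : Integrable (fun x => χ x * fderiv ℝ (fun y => G y (b j)) x (b j)) μ :=
    integrable_mul_of_zero_notMem_tsupport hχ.continuous hχc h0 fun x hx =>
      ((hGj j x hx).fderiv_right (m := 0) le_rfl).continuousAt.clm_apply continuousAt_const
  have hχ'G (j) : Integrable (fun x => fderiv ℝ χ x (b j) * G x (b j)) μ :=
    integrable_mul_of_zero_notMem_tsupport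
      ((hχ.continuous_fderiv one_ne_zero).clm_apply continuous_const)
      (hχc.fderiv_apply ℝ (b j)) (fun h => h0 (tsupport_fderiv_apply_subset ℝ (b j) h))
      fun x hx => (hGj j x hx).continuousAt
  have hparts (j) : ∫ x, χ x * fderiv ℝ (fun y => G y (b j)) x (b j) ∂μ =
      -∫ x, fderiv ℝ χ x (b j) * G x (b j) ∂μ :=
    integral_mul_fderiv_eq_neg_fderiv_mul_of_integrable (hχ'G j) (hχG' j)
      (integrable_mul_of_zero_notMem_tsupport hχ.continuous hχc h0 fun x hx =>
        (hGj j x hx).continuousAt)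
      (fun x _ => hχ.differentiable one_ne_zero x)
      fun x hx => (hGj j x fun h => h0 (h ▸ hx)).differentiableAt one_ne_zero
  calc ∫ x, χ x * divergence G x ∂μ
      = ∫ x, ∑ j, χ x * fderiv ℝ (fun y => G y (b j)) x (b j) ∂μ := by
        congr 1 with x
        rcases eq_or_ne x 0 with rfl | hx
        · simp [image_eq_zero_of_notMem_tsupport h0]
        · simp only [divergence, Finset.mul_sum, hfderiv _ x hx, b]
    _ = _ := by
        rw [integral_finsetSum _ fun j _ => hχG' j, ← Finset.sum_neg_distrib]
        exact Finset.sum_congr rfl fun j _ => hparts j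

theorem tendsto_integral_annularCutoff_mul [Nontrivial E] {f : E → ℝ} (hf : Integrable f μ) :
    Tendsto (fun R => ∫ x, annularCutoff R x * f x ∂μ) atTop (𝓝 (∫ x, f x ∂μ)) := by
  refine tendsto_integral_filter_of_dominated_convergence (fun x => ‖f x‖)
    (.of_forall fun R => (contDiff_annularCutoff R).continuous.aestronglyMeasurable.mul
      hf.aestronglyMeasurable) (.of_forall fun R => .of_forall fun x => ?_) hf.norm ?_
  · rw [norm_mul]
    exact mul_le_of_le_one_left (norm_nonneg _) (abs_annularCutoff_le_one R x)
  · filter_upwards [Measure.ae_ne μ 0] with x hx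
    refine tendsto_const_nhds.congr' ?_
    filter_upwards [eventually_annularCutoff_eventuallyEq_one hx] with R hR
    rw [hR.eq_of_nhds, one_mul]

theorem tendsto_integral_fderiv_annularCutoff_mul [Nontrivial E] {G : E → E →L[ℝ] ℝ}
    (hG : AEStronglyMeasurable G μ) (hint : Integrable (fun x => ‖x‖⁻¹ * ‖G x‖) μ) {e : E}
    (he : ‖e‖ ≤ 1) :
    Tendsto (fun R => ∫ x, fderiv ℝ (annularCutoff R) x e * G x e ∂μ) atTop (𝓝 0) := by
  obtain ⟨C, hC⟩ := exists_norm_mul_norm_fderiv_annularCutoff_le (E := E)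
  have hne : ∀ᵐ x ∂μ, x ≠ 0 := Measure.ae_ne μ 0
  rw [← integral_zero E ℝ]
  refine tendsto_integral_filter_of_dominated_convergence (fun x => C * (‖x‖⁻¹ * ‖G x‖))
    (.of_forall fun R => ?_) (.of_forall fun R => ?_) (hint.const_mul C) ?_
  · exact (((contDiff_annularCutoff R).continuous_fderiv (by simp)).clm_apply
      continuous_const).aestronglyMeasurable.mul (hG.apply_continuousLinearMap e)
  · filter_upwards [hne] with x hx
    have hx0 : ‖x‖ ≠ 0 := norm_ne_zero_iff.2 hx
    calc ‖fderiv ℝ (annularCutoff R) x e * G x e‖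
        ≤ ‖fderiv ℝ (annularCutoff R) x‖ * ‖G x‖ := by
          rw [norm_mul]
          gcongr <;> exact ContinuousLinearMap.unit_le_opNorm _ _ he
      _ = ‖x‖ * ‖fderiv ℝ (annularCutoff R) x‖ * (‖x‖⁻¹ * ‖G x‖) := by field_simp
      _ ≤ C * (‖x‖⁻¹ * ‖G x‖) := by
          gcongr
          exact hC R x
  · filter_upwards [hne] with x hx
    refine tendsto_const_nhds.congr' ?_
    filter_upwards [eventually_annularCutoff_eventuallyEq_one hx] with R hR
    simp [hR.fderiv_eq]

theorem aestronglyMeasurable_of_continuousAt [Nontrivial E] {Z : Type*} [NormedAddCommGroup Z]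
    {f : E → Z} (hf : ∀ x ≠ 0, ContinuousAt f x) : AEStronglyMeasurable f μ := by
  have hcont : ContinuousOn f {0}ᶜ := fun x hx => (hf x hx).continuousWithinAt
  have h := hcont.aestronglyMeasurable (μ := μ) (measurableSet_singleton _).compl
  rwa [restrict_compl_singleton] at h

theorem integral_divergence_eq_zero [Nontrivial E] {G : E → E →L[ℝ] ℝ}
    (hG : ∀ x ≠ 0, ContDiffAt ℝ 1 G x) (hdiv : Integrable (divergence G) μ)
    (hint : Integrable (fun x => ‖x‖⁻¹ * ‖G x‖) μ) : ∫ x, divergence G x ∂μ = 0 := by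
  have hmeas := aestronglyMeasurable_of_continuousAt (μ := μ) fun x hx => (hG x hx).continuousAt
  have hlim0 := tendsto_finsetSum Finset.univ fun j _ =>
    tendsto_integral_fderiv_annularCutoff_mul hmeas hint
      ((stdOrthonormalBasis ℝ E).norm_eq_one j).le
  rw [Finset.sum_const_zero] at hlim0
  refine tendsto_nhds_unique (tendsto_integral_annularCutoff_mul hdiv)
    ((neg_zero (G := ℝ) ▸ hlim0.neg).congr' ?_)
  filter_upwards [eventually_gt_atTop 0] with R hR
  exact (integral_mul_divergence_of_zero_notMem_tsupport
    ((contDiff_annularCutoff R).of_le (by simp)) (hasCompactSupport_annularCutoff hR)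
    (zero_notMem_tsupport_annularCutoff R) hG).symm

end PuncturedDivergenceTheorem

section IntegrableDerivatives

variable {E : Type*} [NormedAddCommGroup E] [NormedSpace ℝ E] [MeasurableSpace E]

/-- The classical part of the Sobolev space `W^{n,1}`: functions of class `C^n` whose derivatives
of order at most `n` are integrable. -/
structure HasIntegrableDerivs (n : ℕ) (u : E → ℝ) (μ : Measure E) : Prop where
  contDiff : ContDiff ℝ n u
  integrable {k : ℕ} : k ≤ n → Integrable (fun x => ‖iteratedFDeriv ℝ k u x‖) μ

namespace HasIntegrableDerivs

variable {n : ℕ} {u : E → ℝ} {μ : Measure E}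

theorem of_le (hu : HasIntegrableDerivs n u μ) {m : ℕ} (hmn : m ≤ n) : HasIntegrableDerivs m u μ :=
  ⟨hu.contDiff.of_le (by exact_mod_cast hmn), fun hk => hu.integrable (hk.trans hmn)⟩

theorem continuous_iteratedFDeriv (hu : HasIntegrableDerivs n u μ) {k : ℕ} (hk : k ≤ n) :
    Continuous (iteratedFDeriv ℝ k u) :=
  hu.contDiff.continuous_iteratedFDeriv (by exact_mod_cast hk)

theorem differentiable_iteratedFDeriv (hu : HasIntegrableDerivs (n + 1) u μ) :
    Differentiable ℝ (iteratedFDeriv ℝ n u) :=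
  hu.contDiff.differentiable_iteratedFDeriv (by exact_mod_cast n.lt_succ_self)

theorem integrable_sum_norm_iteratedFDeriv (hu : HasIntegrableDerivs n u μ) :
    Integrable (fun x => ∑ k ∈ Finset.range (n + 1), ‖iteratedFDeriv ℝ k u x‖) μ :=
  integrable_finsetSum _ fun _ hk => hu.integrable (Finset.mem_range_succ_iff.1 hk)

theorem comp_add_right [BorelSpace E] [μ.IsAddRightInvariant] (hu : HasIntegrableDerivs n u μ)
    (a : E) : HasIntegrableDerivs n (fun x => u (x + a)) μ where
  contDiff := hu.contDiff.comp (contDiff_id.add contDiff_const)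
  integrable {k} hk := by
    simp only [iteratedFDeriv_comp_add_right]
    exact (hu.integrable hk).comp_add_right a

end HasIntegrableDerivs

theorem HasIntegrableDerivs.of_hasCompactSupport [BorelSpace E] {n : ℕ} {u : E → ℝ} {μ : Measure E}
    [IsFiniteMeasureOnCompacts μ] (hu : ContDiff ℝ n u) (hc : HasCompactSupport u) :
    HasIntegrableDerivs n u μ :=
  ⟨hu, fun {k} hk => (hu.continuous_iteratedFDeriv (by exact_mod_cast hk)).norm
    |>.integrable_of_hasCompactSupport (hc.iteratedFDeriv k).norm⟩

end IntegrableDerivatives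

section RepresentationFormula

variable {E : Type*} [NormedAddCommGroup E] [InnerProductSpace ℝ E] [FiniteDimensional ℝ E]

theorem frobeniusInner_one_of_apply_eq {A B : E [×1]→L[ℝ] ℝ} {c : ℝ} {x : E}
    (hB : ∀ v, B v = c * inner ℝ x (v 0)) : frobeniusInner E 1 A B = c * A fun _ => x := by
  have hx := congrArg ((ContinuousMultilinearMap.ofSubsingleton ℝ E ℝ (0 : Fin 1)).symm A)
    ((stdOrthonormalBasis ℝ E).sum_repr' x)
  simp only [map_sum, map_smul, smul_eq_mul] at hx
  change _ = A fun _ => x at hx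
  rw [← hx, frobeniusInner_eq_sum_stdOrthonormalBasis, Finset.mul_sum,
    ← (Equiv.funUnique (Fin 1) _).symm.sum_comp]
  refine Finset.sum_congr rfl fun j _ => ?_
  rw [hB, mul_comm, mul_assoc, real_inner_comm]
  rfl

variable [MeasurableSpace E] [BorelSpace E] {μ : Measure E} [μ.IsAddHaarMeasure] [Nontrivial E]

theorem integrable_bilinear_of_norm_le {V W Z : Type*} [NormedAddCommGroup V] [NormedSpace ℝ V]
    [NormedAddCommGroup W] [NormedSpace ℝ W] [NormedAddCommGroup Z] [NormedSpace ℝ Z]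
    (B : V →L[ℝ] W →L[ℝ] Z) {A : E → V} (hA : Continuous A) (hint : Integrable (fun x => ‖A x‖) μ)
    {F : E → W} (hF : ∀ x ≠ 0, ContinuousAt F x) {C : ℝ} {m : ℤ} (hm : -finrank ℝ E < m)
    (hm0 : m ≤ 0) (hC : ∀ x ≠ 0, ‖F x‖ ≤ C * ‖x‖ ^ m) : Integrable (fun x => B (A x) (F x)) μ := by
  refine ((integrable_mul_norm_zpow hA.norm hint hm hm0).const_mul (‖B‖ * C)).mono'
    (aestronglyMeasurable_of_continuousAt fun x hx =>
      (B.continuous.comp hA).continuousAt.clm_apply (hF x hx)) ?_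
  filter_upwards [Measure.ae_ne μ 0] with x hx
  calc ‖B (A x) (F x)‖ ≤ ‖B‖ * ‖A x‖ * ‖F x‖ := B.le_opNorm₂ _ _
    _ ≤ ‖B‖ * ‖A x‖ * (C * ‖x‖ ^ m) := by
        gcongr
        exact hC x hx
    _ = ‖B‖ * C * (‖A x‖ * ‖x‖ ^ m) := by ring

namespace HasIntegrableDerivs

variable {n k : ℕ} {u : E → ℝ} {m : ℤ}

theorem integrable_frobeniusInner (hu : HasIntegrableDerivs n u μ) (hk : k ≤ n)
    {F : E → E [×k]→L[ℝ] ℝ} (hF : IsIsotropic m F) (hm : -finrank ℝ E < m) (hm0 : m ≤ 0) :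
    Integrable (fun x => frobeniusInner E k (iteratedFDeriv ℝ k u x) (F x)) μ := by
  obtain ⟨C, -, hC⟩ := hF.exists_norm_le
  exact integrable_bilinear_of_norm_le (frobeniusInner E k) (hu.continuous_iteratedFDeriv hk)
    (hu.integrable hk) (fun x hx => (hF.contDiffAt hx).continuousAt) hm hm0 hC

theorem integrable_inv_norm_mul_norm_frobeniusInner_comp (hu : HasIntegrableDerivs n u μ)
    (hk : k ≤ n) {F : E → E [×(k + 1)]→L[ℝ] ℝ} (hF : IsIsotropic m F)
    (hm : 1 - finrank ℝ E < m) (hm0 : m ≤ 0) :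
    Integrable (fun x => ‖x‖⁻¹ *
      ‖(frobeniusInner E k (iteratedFDeriv ℝ k u x)).comp (F x).curryLeft‖) μ := by
  obtain ⟨C, -, hC⟩ := hF.exists_norm_le
  have h := integrable_bilinear_of_norm_le (m := m - 1)
    ((ContinuousLinearMap.compL ℝ E _ ℝ).comp (frobeniusInner E k))
    (hu.continuous_iteratedFDeriv hk) (hu.integrable hk)
    (F := fun x => ‖x‖⁻¹ • (F x).curryLeft) (C := C) ?_ (by linarith) (by linarith) ?_
  · refine h.norm.congr (.of_forall fun x => ?_)
    change ‖(frobeniusInner E k (iteratedFDeriv ℝ k u x)).comp (‖x‖⁻¹ • (F x).curryLeft)‖ = _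
    rw [ContinuousLinearMap.comp_smul, norm_smul, norm_inv, norm_norm]
  · exact fun x hx => (continuousAt_id.norm.inv₀ (norm_ne_zero_iff.2 hx)).smul
      (contDiffAt_curryLeft (hF.contDiffAt hx)).continuousAt
  · intro x hx
    change ‖(‖x‖⁻¹ • F x).curryLeft‖ ≤ _
    rw [ContinuousMultilinearMap.curryLeft_norm, norm_smul, norm_inv, norm_norm,
      zpow_sub_one₀ (norm_ne_zero_iff.2 hx), ← mul_assoc, mul_comm]
    gcongr
    exact hC x hx

theorem integral_frobeniusInner_divergence (hu : HasIntegrableDerivs (k + 1) u μ)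
    {F : E → E [×(k + 1)]→L[ℝ] ℝ} (hF : IsIsotropic m F) (hm : 1 - finrank ℝ E < m) (hm0 : m ≤ 0) :
    ∫ x, frobeniusInner E (k + 1) (iteratedFDeriv ℝ (k + 1) u x) (F x) ∂μ =
      -∫ x, frobeniusInner E k (iteratedFDeriv ℝ k u x)
        (divergence (fun y => (F y).curryLeft) x) ∂μ := by
  set G : E → E →L[ℝ] ℝ := fun x =>
    (frobeniusInner E k (iteratedFDeriv ℝ k u x)).comp (F x).curryLeft
  have hG (x : E) (hx : x ≠ 0) : ContDiffAt ℝ 1 G x :=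
    ContDiffAt.clm_comp (g := fun y => frobeniusInner E k (iteratedFDeriv ℝ k u y))
      (ContDiff.comp (g := frobeniusInner E k) (ContinuousLinearMap.contDiff _)
        (hu.contDiff.iteratedFDeriv_right (m := 1) (by norm_cast; omega))).contDiffAt
      (contDiffAt_curryLeft ((hF.contDiffAt hx).of_le (by simp)))
  have hsum : divergence G =ᵐ[μ] fun x => frobeniusInner E k (iteratedFDeriv ℝ k u x)
      (divergence (fun y => (F y).curryLeft) x) +
        frobeniusInner E (k + 1) (iteratedFDeriv ℝ (k + 1) u x) (F x) :=
    (Measure.ae_ne μ 0).mono fun x hx =>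
      divergence_frobeniusInner (hu.differentiable_iteratedFDeriv x) (hF.differentiableAt hx)
  have hi₀ := hu.integrable_frobeniusInner k.le_succ hF.divergence_curryLeft (by linarith)
    (by linarith)
  have hi₁ := hu.integrable_frobeniusInner le_rfl hF (by linarith) hm0
  have h := integral_divergence_eq_zero hG ((integrable_congr hsum).2 (hi₀.add hi₁))
    (hu.integrable_inv_norm_mul_norm_frobeniusInner_comp k.le_succ hF hm hm0)
  rw [integral_congr_ae hsum, integral_add hi₀ hi₁] at h
  linarith

theorem integral_frobeniusInner_fderiv (hu : HasIntegrableDerivs 1 u μ)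
    {F : E → E [×1]→L[ℝ] ℝ} (hF : IsIsotropic (1 - finrank ℝ E) F) {e : E} (he : ‖e‖ = 1) :
    ∫ x, frobeniusInner E 1 (iteratedFDeriv ℝ 1 u x) (F x) ∂μ =
      -((F e fun _ => e) * (μ.toSphere.real Set.univ * u 0)) := by
  have hd : (0 : ℤ) < finrank ℝ E := by exact_mod_cast finrank_pos
  have hfrob (x : E) (hx : x ≠ 0) : frobeniusInner E 1 (iteratedFDeriv ℝ 1 u x) (F x) =
      (F e fun _ => e) * (‖x‖ ^ (-finrank ℝ E : ℤ) * fderiv ℝ u x x) := by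
    rw [frobeniusInner_one_of_apply_eq (hF.apply_fin_one he hx), iteratedFDeriv_one_apply,
      sub_sub_cancel_left, mul_assoc]
  have hint : Integrable (fun x => ‖x‖ ^ (-finrank ℝ E : ℤ) * fderiv ℝ u x x) μ := by
    have hself (x : E) (hx : x ≠ 0) : ‖‖x‖ ^ (-finrank ℝ E : ℤ) • x‖ ≤
        1 * ‖x‖ ^ (1 - finrank ℝ E : ℤ) := by
      rw [norm_smul, norm_zpow, norm_norm, one_mul, sub_eq_neg_add,
        zpow_add_one₀ (norm_ne_zero_iff.2 hx)]
    have h := integrable_bilinear_of_norm_le (μ := μ) (ContinuousLinearMap.id ℝ (E →L[ℝ] ℝ))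
      (hu.contDiff.continuous_fderiv one_ne_zero) ?_ (fun x hx =>
        ((contDiffAt_norm_zpow (n := 0) _ hx).continuousAt.smul continuousAt_id)) (by linarith)
      (by linarith) hself
    · simpa using h
    · exact (hu.integrable le_rfl).congr (.of_forall fun x => norm_iteratedFDeriv_one u)
  rw [integral_congr_ae ((Measure.ae_ne μ 0).mono hfrob), integral_const_mul,
    integral_norm_zpow_mul_fderiv_self hu.contDiff _ hint, mul_neg]
  exact (integrable_norm_iff hu.contDiff.continuous.aestronglyMeasurable).1
    ((hu.integrable zero_le_one).congr (.of_forall fun x => norm_iteratedFDeriv_zero))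

theorem integral_frobeniusInner_isotropic (hu : HasIntegrableDerivs (k + 1) u μ)
    (hk : k + 1 ≤ finrank ℝ E) {F : E → E [×(k + 1)]→L[ℝ] ℝ}
    (hF : IsIsotropic (k + 1 - finrank ℝ E) F) {e : E} (he : ‖e‖ = 1) :
    ∫ x, frobeniusInner E (k + 1) (iteratedFDeriv ℝ (k + 1) u x) (F x) ∂μ =
      -(frobeniusInner E (k + 1) (iteratedFDeriv ℝ (k + 1) (fun y => Real.log ‖y‖) e) (F e) *
        (μ.toSphere.real Set.univ * u 0)) := by
  induction k with
  | zero =>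
    have he0 : e ≠ 0 := norm_ne_zero_iff.1 (he.trans_ne one_ne_zero)
    rw [hu.integral_frobeniusInner_fderiv (by simpa using hF) he, frobeniusInner_comm,
      frobeniusInner_one_of_apply_eq (iteratedFDeriv_one_log_norm_apply he0), he]
    simp
  | succ k ih =>
    have he0 : e ≠ 0 := norm_ne_zero_iff.1 (he.trans_ne one_ne_zero)
    push_cast at hF
    have hdiv : IsIsotropic (k + 1 - finrank ℝ E) (divergence fun y => (F y).curryLeft) := by
      convert hF.divergence_curryLeft using 1
      ring
    have h := (isIsotropic_iteratedFDeriv_log_norm (E := E) k)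
      |>.frobeniusInner_gradient_add_divergence_eq_zero hF (by ring) he0
    rw [tensorGradient_iteratedFDeriv] at h
    rw [hu.integral_frobeniusInner_divergence hF (by linarith) (by zify at hk; linarith),
      ih (hu.of_le (by omega)) (by omega) hdiv, eq_neg_of_add_eq_zero_left h]
    ring

end HasIntegrableDerivs

end RepresentationFormula

section SharpInequality

theorem ae_abs_eq_of_integral_le_abs_integral {α : Type*} [MeasurableSpace α] {μ : Measure α}
    {φ ψ : α → ℝ} (hφ : Integrable φ μ) (hψ : Integrable ψ μ) (hle : ∀ᵐ x ∂μ, |φ x| ≤ ψ x)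
    (h : ∫ x, ψ x ∂μ ≤ |∫ x, φ x ∂μ|) : (fun x => |φ x|) =ᵐ[μ] ψ :=
  (integral_eq_iff_of_ae_le hφ.abs hψ hle).1 <|
    (integral_mono_ae hφ.abs hψ hle).antisymm (h.trans abs_integral_le_integral_abs)

variable {E : Type*} [NormedAddCommGroup E] [InnerProductSpace ℝ E]

/-- The tensor of `n`-th derivatives of `log ‖x‖`, normalized by the factor `‖x‖ ^ n` so that it is
positively homogeneous of degree `0`. -/
def logTensor (n : ℕ) (x : E) : E [×n]→L[ℝ] ℝ :=
  ‖x‖ ^ (n : ℤ) • iteratedFDeriv ℝ n (fun y => Real.log ‖y‖) x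

theorem isIsotropic_logTensor (n : ℕ) :
    IsIsotropic 0 (logTensor (n + 1) : E → E [×(n + 1)]→L[ℝ] ℝ) := by
  have h := (isIsotropic_iteratedFDeriv_log_norm (E := E) n).norm_zpow_smul (n + 1 : ℕ)
  rwa [Nat.cast_succ, add_neg_cancel] at h

theorem logTensor_ne_zero (n : ℕ) {x : E} (hx : x ≠ 0) : logTensor (n + 1) x ≠ 0 :=
  smul_ne_zero (zpow_ne_zero _ (norm_ne_zero_iff.2 hx)) (iteratedFDeriv_log_norm_ne_zero n hx)

theorem logTensor_of_norm_eq_one (n : ℕ) {e : E} (he : ‖e‖ = 1) :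
    logTensor n e = iteratedFDeriv ℝ n (fun y => Real.log ‖y‖) e := by
  rw [logTensor, he, _root_.one_zpow, one_smul]

variable [FiniteDimensional ℝ E]

theorem IsIsotropic.norm_tensorCoords_eq {k : ℕ} {F : E → E [×k]→L[ℝ] ℝ} (hF : IsIsotropic 0 F)
    {e x : E} (he : ‖e‖ = 1) (hx : x ≠ 0) :
    ‖tensorCoords E k (F x)‖ = ‖tensorCoords E k (F e)‖ := by
  obtain ⟨R, hR⟩ := exists_linearIsometryEquiv_apply_eq (x := e) (y := ‖x‖⁻¹ • x)
    (by simp [he, norm_smul, norm_ne_zero_iff.2 hx])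
  have hFx : F x = F (R e) := by
    rw [hR, hF.map_smul hx (inv_pos.2 (norm_pos_iff.2 hx)), zpow_zero, one_smul]
  have he0 : e ≠ 0 := norm_ne_zero_iff.1 (he.trans_ne one_ne_zero)
  rw [← sq_eq_sq₀ (norm_nonneg _) (norm_nonneg _), ← frobeniusInner_self, ← frobeniusInner_self,
    hFx, ← hF.map_isometry R he0, frobeniusInner_compContinuousLinearMap]

theorem norm_tensorCoords_logTensor_pos (n : ℕ) {x : E} (hx : x ≠ 0) :
    0 < ‖tensorCoords E (n + 1) (logTensor (n + 1) x)‖ :=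
  norm_pos_iff.2 <| (map_ne_zero_iff _ (tensorCoords_injective _)).2 (logTensor_ne_zero n hx)

theorem abs_frobeniusInner_le {k : ℕ} (A B : E [×k]→L[ℝ] ℝ) :
    |frobeniusInner E k A B| ≤ ‖tensorCoords E k A‖ * ‖tensorCoords E k B‖ :=
  abs_real_inner_le_norm (tensorCoords E k A) (tensorCoords E k B)

theorem exists_eq_smul_of_abs_frobeniusInner_eq {k : ℕ} {A B : E [×k]→L[ℝ] ℝ} (hB : B ≠ 0)
    (h : |frobeniusInner E k A B| = ‖tensorCoords E k A‖ * ‖tensorCoords E k B‖) :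
    ∃ c : ℝ, A = c • B := by
  rw [frobeniusInner_comm, mul_comm] at h
  rcases ((norm_inner_eq_norm_tfae ℝ (tensorCoords E k B) (tensorCoords E k A)).out 0 2).1 h
    with h₀ | ⟨c, hc⟩
  · exact absurd ((map_eq_zero_iff _ (tensorCoords_injective k)).1 h₀) hB
  · exact ⟨c, tensorCoords_injective k (hc.trans (map_smul _ c B).symm)⟩

variable [MeasurableSpace E] {μ : Measure E}

theorem HasIntegrableDerivs.continuous_norm_tensorCoords {n : ℕ} {u : E → ℝ}
    (hu : HasIntegrableDerivs n u μ) :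
    Continuous fun x => ‖tensorCoords E n (iteratedFDeriv ℝ n u x)‖ :=
  ((tensorCoords E n).continuous.comp (hu.continuous_iteratedFDeriv le_rfl)).norm

theorem HasIntegrableDerivs.integrable_norm_tensorCoords [BorelSpace E] {n : ℕ} {u : E → ℝ}
    (hu : HasIntegrableDerivs n u μ) :
    Integrable (fun x => ‖tensorCoords E n (iteratedFDeriv ℝ n u x)‖) μ := by
  have h : Integrable (iteratedFDeriv ℝ n u) μ := (integrable_norm_iff
    (hu.continuous_iteratedFDeriv le_rfl).aestronglyMeasurable).1 (hu.integrable le_rfl)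
  exact (ContinuousLinearMap.integrable_comp (tensorCoords E n) h).norm

variable [BorelSpace E] [μ.IsAddHaarMeasure]

theorem toSphere_real_univ_pos [Nontrivial E] : 0 < μ.toSphere.real Set.univ :=
  have : NeZero μ.toSphere := ⟨μ.toSphere_ne_zero⟩
  measureReal_univ_pos

namespace HasIntegrableDerivs

variable {n : ℕ} {u : E → ℝ} {e : E}

theorem integral_frobeniusInner_logTensor (hu : HasIntegrableDerivs (n + 1) u μ)
    (hd : finrank ℝ E = n + 1) (he : ‖e‖ = 1) :
    ∫ x, frobeniusInner E (n + 1) (iteratedFDeriv ℝ (n + 1) u x) (logTensor (n + 1) x) ∂μ =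
      -(‖tensorCoords E (n + 1) (logTensor (n + 1) e)‖ ^ 2 * (μ.toSphere.real Set.univ * u 0)) := by
  have : Nontrivial E := nontrivial_of_finrank_pos (R := ℝ) (by omega)
  rw [hu.integral_frobeniusInner_isotropic hd.ge
    (by simpa [hd] using isIsotropic_logTensor n) he, ← logTensor_of_norm_eq_one _ he,
    frobeniusInner_self]

theorem integrable_frobeniusInner_logTensor (hu : HasIntegrableDerivs (n + 1) u μ) [Nontrivial E] :
    Integrable (fun x =>
      frobeniusInner E (n + 1) (iteratedFDeriv ℝ (n + 1) u x) (logTensor (n + 1) x)) μ :=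
  hu.integrable_frobeniusInner le_rfl (isIsotropic_logTensor n)
    (by simpa using finrank_pos (R := ℝ) (M := E)) le_rfl

theorem ae_abs_frobeniusInner_logTensor_le [Nontrivial E] (he : ‖e‖ = 1) :
    ∀ᵐ x ∂μ, |frobeniusInner E (n + 1) (iteratedFDeriv ℝ (n + 1) u x) (logTensor (n + 1) x)| ≤
      ‖tensorCoords E (n + 1) (iteratedFDeriv ℝ (n + 1) u x)‖ *
        ‖tensorCoords E (n + 1) (logTensor (n + 1) e)‖ := by
  filter_upwards [Measure.ae_ne μ 0] with x hx
  rw [← (isIsotropic_logTensor n).norm_tensorCoords_eq he hx]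
  exact abs_frobeniusInner_le _ _

theorem abs_apply_zero_le (hu : HasIntegrableDerivs (n + 1) u μ) (hd : finrank ℝ E = n + 1)
    (he : ‖e‖ = 1) :
    |u 0| ≤ (‖tensorCoords E (n + 1) (logTensor (n + 1) e)‖ * μ.toSphere.real Set.univ)⁻¹ *
      ∫ x, ‖tensorCoords E (n + 1) (iteratedFDeriv ℝ (n + 1) u x)‖ ∂μ := by
  have : Nontrivial E := nontrivial_of_finrank_pos (R := ℝ) (by omega)
  have hω := toSphere_real_univ_pos (μ := μ)
  have hℓ := norm_tensorCoords_logTensor_pos n (norm_ne_zero_iff.1 (he.trans_ne one_ne_zero))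
  have h := (abs_integral_le_integral_abs (μ := μ)).trans <|
    integral_mono_ae hu.integrable_frobeniusInner_logTensor.abs
      (hu.integrable_norm_tensorCoords.mul_const _) (ae_abs_frobeniusInner_logTensor_le he)
  rw [hu.integral_frobeniusInner_logTensor hd he, integral_mul_const, abs_neg, abs_mul, abs_mul,
    abs_of_pos hω, abs_of_pos (pow_pos hℓ 2)] at h
  rw [inv_mul_eq_div, le_div_iff₀ (mul_pos hℓ hω)]
  refine le_of_mul_le_mul_right ?_ hℓ
  linarith

theorem exists_iteratedFDeriv_eq_smul_of_abs_apply_zero_eq (hu : HasIntegrableDerivs (n + 1) u μ)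
    (hd : finrank ℝ E = n + 1) (he : ‖e‖ = 1)
    (heq : |u 0| = (‖tensorCoords E (n + 1) (logTensor (n + 1) e)‖ * μ.toSphere.real Set.univ)⁻¹ *
      ∫ x, ‖tensorCoords E (n + 1) (iteratedFDeriv ℝ (n + 1) u x)‖ ∂μ) {x : E} (hx : x ≠ 0) :
    ∃ c : ℝ, iteratedFDeriv ℝ (n + 1) u x =
      c • iteratedFDeriv ℝ (n + 1) (fun y => Real.log ‖y‖) x := by
  have : Nontrivial E := nontrivial_of_finrank_pos (R := ℝ) (by omega)
  have hω := toSphere_real_univ_pos (μ := μ)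
  have hℓ := norm_tensorCoords_logTensor_pos n (norm_ne_zero_iff.1 (he.trans_ne one_ne_zero))
  have hae := ae_abs_eq_of_integral_le_abs_integral hu.integrable_frobeniusInner_logTensor
    (hu.integrable_norm_tensorCoords.mul_const _) (ae_abs_frobeniusInner_logTensor_le he) (by
      rw [hu.integral_frobeniusInner_logTensor hd he, integral_mul_const, abs_neg, abs_mul,
        abs_mul, abs_of_pos hω, abs_of_pos (pow_pos hℓ 2), heq]
      field_simp
      exact le_rfl)
  have hcont : ContinuousOn (fun x => |frobeniusInner E (n + 1) (iteratedFDeriv ℝ (n + 1) u x)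
      (logTensor (n + 1) x)|) {0}ᶜ := fun x hx =>
    (ContinuousAt.clm_apply ((frobeniusInner E (n + 1)).continuous.comp
      (hu.continuous_iteratedFDeriv le_rfl)).continuousAt
      ((isIsotropic_logTensor n).contDiffAt hx).continuousAt).abs.continuousWithinAt
  have heqOn := Measure.eqOn_open_of_ae_eq (ae_restrict_of_ae hae) isOpen_compl_singleton hcont
    (hu.continuous_norm_tensorCoords.mul continuous_const).continuousOn hx
  rw [← (isIsotropic_logTensor n).norm_tensorCoords_eq he hx] at heqOn
  obtain ⟨c, hc⟩ := exists_eq_smul_of_abs_frobeniusInner_eq (logTensor_ne_zero n hx) heqOn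
  exact ⟨c * ‖x‖ ^ ((n + 1 : ℕ) : ℤ), by rw [hc, logTensor, mul_smul]⟩

end HasIntegrableDerivs

end SharpInequality

section Decay

theorem exists_norm_iteratedFDeriv_mul_le_indicator {E : Type*} [NormedAddCommGroup E]
    [NormedSpace ℝ E] {n : ℕ} {χ : E → ℝ} (hχ : ContDiff ℝ n χ) (hc : HasCompactSupport χ) :
    ∃ C, ∀ {v : E → ℝ}, ContDiff ℝ n v → ∀ x, ‖iteratedFDeriv ℝ n (fun y => v y * χ y) x‖ ≤
      C * (tsupport χ).indicator
        (fun y => ∑ k ∈ Finset.range (n + 1), ‖iteratedFDeriv ℝ k v y‖) x := by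
  have hbound (k : ℕ) : ∃ B, ∀ x, ‖iteratedFDeriv ℝ (n - k) χ x‖ ≤ B :=
    (hc.iteratedFDeriv (𝕜 := ℝ) (n - k)).exists_bound_of_continuous
      (hχ.continuous_iteratedFDeriv (by exact_mod_cast n.sub_le k))
  choose B hB using hbound
  refine ⟨∑ k ∈ Finset.range (n + 1), n.choose k * B k, fun {v} hv x => ?_⟩
  by_cases hx : x ∈ tsupport χ
  · rw [Set.indicator_of_mem hx, Finset.sum_mul]
    refine (norm_iteratedFDeriv_mul_le hv hχ x le_rfl).trans (Finset.sum_le_sum fun k hk => ?_)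
    have hk' : ‖iteratedFDeriv ℝ k v x‖ ≤ ∑ j ∈ Finset.range (n + 1), ‖iteratedFDeriv ℝ j v x‖ :=
      Finset.single_le_sum (f := fun j => ‖iteratedFDeriv ℝ j v x‖) (fun _ _ => norm_nonneg _) hk
    rw [mul_assoc, mul_assoc, mul_comm (B k)]
    gcongr
    exact hB k x
  · rw [Set.indicator_of_notMem hx, mul_zero, norm_le_zero_iff]
    contrapose! hx
    exact tsupport_mul_subset_right (support_iteratedFDeriv_subset n hx)

theorem tendsto_setIntegral_closedBall_cocompact {E : Type*} [NormedAddCommGroup E] [ProperSpace E]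
    [MeasurableSpace E] [OpensMeasurableSpace E] {μ : Measure E} {f : E → ℝ} (hf : Integrable f μ)
    (r : ℝ) : Tendsto (fun y => ∫ x in closedBall y r, f x ∂μ) (cocompact E) (𝓝 0) := by
  simp only [← integral_indicator measurableSet_closedBall]
  have : (cocompact E).IsCountablyGenerated := by
    rw [← cobounded_eq_cocompact, ← comap_norm_atTop]
    infer_instance
  rw [← integral_zero E ℝ (μ := μ)]
  refine tendsto_integral_filter_of_dominated_convergence (fun x => ‖f x‖)
    (.of_forall fun y => (hf.indicator measurableSet_closedBall).aestronglyMeasurable)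
    (.of_forall fun y => .of_forall fun x => norm_indicator_le_norm_self _ _) hf.norm
    (.of_forall fun x => tendsto_const_nhds.congr' ?_)
  filter_upwards [(isCompact_closedBall x r).compl_mem_cocompact] with y hy
  exact (Set.indicator_of_notMem (by rwa [mem_closedBall_comm]) f).symm

namespace HasIntegrableDerivs

variable {E : Type*} [NormedAddCommGroup E] [InnerProductSpace ℝ E] [FiniteDimensional ℝ E]
  [MeasurableSpace E] [BorelSpace E] {μ : Measure E} [μ.IsAddHaarMeasure]
  {n : ℕ} {u : E → ℝ}

theorem exists_abs_apply_zero_le (hd : finrank ℝ E = n) (hn : n ≠ 0) : ∃ C, 0 ≤ C ∧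
    ∀ {u : E → ℝ}, HasIntegrableDerivs n u μ → |u 0| ≤ C * ∫ x, ‖iteratedFDeriv ℝ n u x‖ ∂μ := by
  obtain ⟨n, rfl⟩ := Nat.exists_eq_succ_of_ne_zero hn
  have : Nontrivial E := nontrivial_of_finrank_pos (R := ℝ) (by omega)
  obtain ⟨e, he⟩ := exists_norm_eq E zero_le_one
  obtain ⟨D, hD, hbound⟩ := (tensorCoords E (n + 1)).bound
  refine ⟨(‖tensorCoords E (n + 1) (logTensor (n + 1) e)‖ * μ.toSphere.real Set.univ)⁻¹ * D,
    by positivity, fun hu => (hu.abs_apply_zero_le hd he).trans ?_⟩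
  rw [mul_assoc, ← integral_const_mul D]
  refine mul_le_mul_of_nonneg_left (integral_mono hu.integrable_norm_tensorCoords
    ((hu.integrable le_rfl).const_mul D) fun x => hbound _) ?_
  positivity

theorem exists_abs_apply_le_setIntegral (hd : finrank ℝ E = n) (hn : n ≠ 0) :
    ∃ C, ∀ {u : E → ℝ}, HasIntegrableDerivs n u μ → ∀ y, |u y| ≤
      C * ∫ x in closedBall y 2, ∑ k ∈ Finset.range (n + 1), ‖iteratedFDeriv ℝ k u x‖ ∂μ := by
  obtain ⟨C, hC, hzero⟩ := exists_abs_apply_zero_le (μ := μ) hd hn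
  obtain ⟨D, hD⟩ := exists_norm_iteratedFDeriv_mul_le_indicator (n := n) (unitBump E).contDiff
    (unitBump E).hasCompactSupport
  refine ⟨C * D, fun {u} hu y => ?_⟩
  have huy := hu.comp_add_right y
  have hball : tsupport (unitBump E) = (· + y) ⁻¹' closedBall y 2 := by
    rw [(unitBump E).tsupport_eq, preimage_add_right_closedBall, sub_self, unitBump]
  have h := hzero (.of_hasCompactSupport (huy.contDiff.mul (unitBump E).contDiff)
    (unitBump E).hasCompactSupport.mul_left)
  rw [(unitBump E).one_of_mem_closedBall (mem_closedBall_self zero_le_one), mul_one, zero_add] at h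
  rw [mul_assoc, ← integral_indicator measurableSet_closedBall, ← integral_const_mul,
    ← integral_add_right_eq_self _ y]
  refine h.trans (mul_le_mul_of_nonneg_left (integral_mono_of_nonneg
    (.of_forall fun x => norm_nonneg _) (((hu.integrable_sum_norm_iteratedFDeriv.indicator
      measurableSet_closedBall).const_mul D).comp_add_right y) (.of_forall fun x => ?_)) hC)
  refine (hD huy.contDiff x).trans_eq (congrArg (D * ·) ?_)
  simp only [iteratedFDeriv_comp_add_right, hball]
  rfl

theorem tendsto_cocompact_zero (hu : HasIntegrableDerivs n u μ) (hd : finrank ℝ E = n)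
    (hn : n ≠ 0) : Tendsto u (cocompact E) (𝓝 0) := by
  obtain ⟨C, hC⟩ := exists_abs_apply_le_setIntegral (μ := μ) hd hn
  have h := (tendsto_setIntegral_closedBall_cocompact
    hu.integrable_sum_norm_iteratedFDeriv 2).const_mul C
  rw [mul_zero] at h
  exact squeeze_zero_norm (hC hu) h

end HasIntegrableDerivs

theorem exists_forall_abs_le_of_tendsto_cocompact {X : Type*} [TopologicalSpace X] {u : X → ℝ}
    (hu : Continuous u) (h : Tendsto u (cocompact X) (𝓝 0)) (hne : u ≠ 0) :
    ∃ x, u x ≠ 0 ∧ ∀ y, |u y| ≤ |u x| := by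
  obtain ⟨a, ha⟩ := Function.ne_iff.1 hne
  have ha' : 0 < |u a| := abs_pos.2 ha
  have h' : Tendsto (fun x => |u x|) (cocompact X) (𝓝 0) := by simpa using h.abs
  obtain ⟨x, hx⟩ := hu.abs.exists_forall_ge' a
    ((h'.eventually_lt_const ha').mono fun _ => le_of_lt)
  exact ⟨x, abs_pos.1 (ha'.trans_le (hx a)), hx⟩

end Decay

section Laplacian

open InnerProductSpace Laplacian

theorem iteratedFDeriv_apply_eq_of_iteratedFDeriv_succ_eq_zero {E F : Type*} [NormedAddCommGroup E]
    [NormedSpace ℝ E] [NormedAddCommGroup F] [NormedSpace ℝ F] {m : ℕ} {f : E → F}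
    (hf : ContDiff ℝ (m + 1) f) (h : iteratedFDeriv ℝ (m + 1) f = 0) (x y : E) :
    iteratedFDeriv ℝ m f x = iteratedFDeriv ℝ m f y := by
  refine is_const_of_fderiv_eq_zero (𝕜 := ℝ)
    (hf.differentiable_iteratedFDeriv (by exact_mod_cast m.lt_succ_self)) (fun z => ?_) x y
  rw [fderiv_iteratedFDeriv, h]
  exact (continuousMultilinearCurryLeftEquiv ℝ (fun _ : Fin (m + 1) => E) F).map_zero

variable {E F : Type*} [NormedAddCommGroup E] [InnerProductSpace ℝ E] [FiniteDimensional ℝ E]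
  [NormedAddCommGroup F] [NormedSpace ℝ F] {m : ℕ} {f : E → F} {x : E}

variable (E F) in
/-- The trace of a bilinear map on an inner product space; the Laplacian is the trace of the second
derivative. -/
def bilinearTrace : (E →L[ℝ] E →L[ℝ] F) →L[ℝ] F :=
  ∑ i, (ContinuousLinearMap.apply ℝ F (stdOrthonormalBasis ℝ E i)).comp
    (ContinuousLinearMap.apply ℝ (E →L[ℝ] F) (stdOrthonormalBasis ℝ E i))

theorem bilinearTrace_apply (B : E →L[ℝ] E →L[ℝ] F) :
    bilinearTrace E F B = ∑ i, B (stdOrthonormalBasis ℝ E i) (stdOrthonormalBasis ℝ E i) := by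
  simp [bilinearTrace]

theorem laplacian_eq_bilinearTrace_comp (f : E → F) :
    Δ f = bilinearTrace E F ∘ fderiv ℝ (fderiv ℝ f) := by
  ext y
  simp [bilinearTrace_apply, laplacian_eq_iteratedFDeriv_stdOrthonormalBasis,
    iteratedFDeriv_two_apply]

theorem contDiff_laplacian (hf : ContDiff ℝ (m + 2) f) : ContDiff ℝ m (Δ f) := by
  rw [laplacian_eq_bilinearTrace_comp]
  exact (bilinearTrace E F).contDiff.comp
    ((hf.fderiv_right (m := m + 1) le_rfl).fderiv_right le_rfl)

theorem iteratedFDeriv_laplacian_apply (hf : ContDiffAt ℝ (m + 2) f x) (v : Fin m → E) :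
    iteratedFDeriv ℝ m (Δ f) x v = ∑ i, iteratedFDeriv ℝ (m + 2) f x
      (Fin.snoc (Fin.snoc (α := fun _ => E) v (stdOrthonormalBasis ℝ E i) : Fin (m + 1) → E)
        (stdOrthonormalBasis ℝ E i)) := by
  rw [laplacian_eq_bilinearTrace_comp,
    (bilinearTrace E F).iteratedFDeriv_comp_left
      ((hf.fderiv_right (m := m + 1) le_rfl).fderiv_right le_rfl) le_rfl]
  simp [bilinearTrace_apply, iteratedFDeriv_succ_apply_right]

theorem laplacian_comp_add_right (f : E → F) (a : E) :
    Δ (fun x => f (x + a)) = fun x => Δ f (x + a) := by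
  simp only [laplacian_eq_iteratedFDeriv_stdOrthonormalBasis, iteratedFDeriv_comp_add_right]

theorem iteratedFDeriv_laplacian_comp_add_right_sub_eq_zero (hf : ContDiff ℝ (m + 1 + 2) f)
    (h : iteratedFDeriv ℝ (m + 1) (Δ f) = 0) (a : E) :
    iteratedFDeriv ℝ m (Δ ((fun x => f (x + a)) - f)) = 0 := by
  have hf₂ : ContDiff ℝ 2 f := hf.of_le (by norm_cast; omega)
  have hΔ : ContDiff ℝ (m + 1) (Δ f) := contDiff_laplacian (m := m + 1) (mod_cast hf)
  have hΔm : ContDiff ℝ m (Δ f) := hΔ.of_le (by norm_cast; omega)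
  have htrans {k : ℕ∞ω} {v : E → F} (hv : ContDiff ℝ k v) : ContDiff ℝ k fun x => v (x + a) :=
    hv.comp (contDiff_id.add contDiff_const)
  have hsub : Δ ((fun x => f (x + a)) - f) = (fun x => Δ f (x + a)) - Δ f := by
    ext x
    rw [ContDiffAt.laplacian_sub (htrans hf₂).contDiffAt hf₂.contDiffAt,
      laplacian_comp_add_right, Pi.sub_apply]
  ext1 x
  rw [hsub, iteratedFDeriv_sub_apply (htrans hΔm).contDiffAt hΔm.contDiffAt,
    iteratedFDeriv_comp_add_right,
    iteratedFDeriv_apply_eq_of_iteratedFDeriv_succ_eq_zero hΔ h (x + a) x, sub_self]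
  rfl

theorem eq_zero_of_forall_eq_of_tendsto {X : Type*} {l : Filter X} [l.NeBot] {g : X → ℝ}
    (h : ∀ x y, g x = g y) (hl : Tendsto g l (𝓝 0)) : g = 0 :=
  funext fun x => tendsto_nhds_unique (tendsto_const_nhds.congr (h x)) hl

theorem eq_zero_of_iteratedFDeriv_laplacian_eq_zero {g : ℂ → ℝ} (hg : ContDiff ℝ (m + 2) g)
    (hΔ : iteratedFDeriv ℝ m (Δ g) = 0) (hlim : Tendsto g (cocompact ℂ) (𝓝 0)) : g = 0 := by
  induction m generalizing g with
  | zero =>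
    have hΔ' (z : ℂ) : Δ g z = 0 := congrArg (· 0) (congrFun hΔ z)
    exact eq_zero_of_forall_eq_of_tendsto (bounded_harmonic_on_complex_plane_is_constant g
      (fun z _ => ⟨(hg.of_le (by simp)).contDiffAt, .of_forall hΔ'⟩)
      (ZeroAtInftyContinuousMap.isBounded_range ⟨⟨g, hg.continuous⟩, hlim⟩)) hlim
  | succ m ih =>
    -- Differencing in any direction lowers the order of the equation by one.
    have hdiff (a : ℂ) : (fun x => g (x + a)) - g = 0 := by
      have hg' : ContDiff ℝ (m + 2) g := hg.of_le (by norm_cast; omega)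
      refine ih ((hg'.comp (contDiff_id.add contDiff_const)).sub hg')
        (iteratedFDeriv_laplacian_comp_add_right_sub_eq_zero (mod_cast hg) hΔ a) ?_
      rw [← sub_zero (0 : ℝ)]
      exact (hlim.comp (Homeomorph.addRight a).isClosedEmbedding.tendsto_cocompact).sub hlim
    refine eq_zero_of_forall_eq_of_tendsto (fun x y => ?_) hlim
    simpa using (sub_eq_zero.1 (congrFun (hdiff (y - x)) x)).symm

theorem exists_linearIsometry_complex (hd : 2 ≤ finrank ℝ E) : Nonempty (ℂ →ₗᵢ[ℝ] E) := by
  have h := (stdOrthonormalBasis ℝ E).orthonormal.comp _ (Fin.castLE_injective hd)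
  refine ⟨(Complex.orthonormalBasisOneI.toBasis.constr ℝ
    (stdOrthonormalBasis ℝ E ∘ Fin.castLE hd)).isometryOfOrthonormal
    (v := Complex.orthonormalBasisOneI.toBasis) (by simp) ?_⟩
  rwa [show _ ∘ _ = _ from funext (Basis.constr_basis _ ℝ _)]

end Laplacian

section Rigidity

open InnerProductSpace Laplacian

variable {E : Type*} [NormedAddCommGroup E] [InnerProductSpace ℝ E]

theorem iteratedFDeriv_laplacian_eq_zero_of_eq_smul [FiniteDimensional ℝ E] {m : ℕ} {f g : E → ℝ}
    {x : E} (hf : ContDiffAt ℝ (m + 2) f x) (hg : ContDiffAt ℝ (m + 2) g x) (hΔ : Δ f =ᶠ[𝓝 x] 0)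
    {c : ℝ} (h : iteratedFDeriv ℝ (m + 2) g x = c • iteratedFDeriv ℝ (m + 2) f x) :
    iteratedFDeriv ℝ m (Δ g) x = 0 := by
  have hf₀ : iteratedFDeriv ℝ m (Δ f) x = 0 := by
    rw [(hΔ.iteratedFDeriv ℝ m).eq_of_nhds, iteratedFDeriv_zero]
    rfl
  ext v
  have hv := congrArg (c * · v) hf₀
  simp only [iteratedFDeriv_laplacian_apply hf, Finset.mul_sum] at hv
  rw [iteratedFDeriv_laplacian_apply hg, h]
  simpa using hv

theorem iteratedFDeriv_log_norm_comp_linearIsometry {F : Type*} [NormedAddCommGroup F]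
    [InnerProductSpace ℝ F] (k : ℕ) (L : F →ₗᵢ[ℝ] E) {x : F} (hx : x ≠ 0) :
    (iteratedFDeriv ℝ k (fun y => Real.log ‖y‖) (L x)).compContinuousLinearMap
      (fun _ => L.toContinuousLinearMap) = iteratedFDeriv ℝ k (fun y => Real.log ‖y‖) x := by
  have hlog : (fun y : E => Real.log ‖y‖) ∘ L.toContinuousLinearMap = fun y => Real.log ‖y‖ :=
    funext fun y => congrArg Real.log (L.norm_map y)
  have hpre : L.toContinuousLinearMap ⁻¹' {0}ᶜ = {0}ᶜ := by
    ext y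
    exact not_congr (map_eq_zero_iff L L.injective)
  have hLx : L x ∈ ({0}ᶜ : Set E) := (map_ne_zero_iff L L.injective).2 hx
  have h := L.toContinuousLinearMap.iteratedFDerivWithin_comp_right (n := k) (s := {0}ᶜ)
    (fun y hy => (contDiffAt_log_norm hy).contDiffWithinAt) isOpen_compl_singleton.uniqueDiffOn
    (hpre ▸ isOpen_compl_singleton.uniqueDiffOn) hLx le_rfl
  rw [hlog, hpre, iteratedFDerivWithin_of_isOpen k isOpen_compl_singleton hx] at h
  rw [h]
  exact congrArg (ContinuousMultilinearMap.compContinuousLinearMap · _)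
    (iteratedFDerivWithin_of_isOpen k isOpen_compl_singleton hLx).symm

variable {m : ℕ} {u : E → ℝ}

theorem iteratedFDeriv_laplacian_comp_eq_zero (hu : ContDiff ℝ (m + 2) u)
    (h : ∀ x ≠ 0, ∃ c : ℝ, iteratedFDeriv ℝ (m + 2) u x =
      c • iteratedFDeriv ℝ (m + 2) (fun y => Real.log ‖y‖) x) (L : ℂ →ₗᵢ[ℝ] E) :
    iteratedFDeriv ℝ m (Δ (u ∘ L)) = 0 := by
  have hg : ContDiff ℝ (m + 2) (u ∘ L) := hu.comp L.contDiff
  refine Continuous.ext_on (dense_compl_singleton (0 : ℂ))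
    ((contDiff_laplacian hg).continuous_iteratedFDeriv le_rfl) continuous_const fun z hz => ?_
  obtain ⟨c, hc⟩ := h (L z) ((map_ne_zero_iff L L.injective).2 hz)
  refine iteratedFDeriv_laplacian_eq_zero_of_eq_smul (contDiffAt_log_norm hz) hg.contDiffAt
    (analyticAt_id.harmonicAt_log_norm hz).2 (c := c) ?_
  have hcomp := L.toContinuousLinearMap.iteratedFDeriv_comp_right hu z (i := m + 2) le_rfl
  refine hcomp.trans ?_
  rw [← iteratedFDeriv_log_norm_comp_linearIsometry _ L hz]
  exact congrArg (ContinuousMultilinearMap.compContinuousLinearMap · _) hc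

theorem apply_zero_eq_zero_of_iteratedFDeriv_eq_smul [FiniteDimensional ℝ E]
    (hd : 2 ≤ finrank ℝ E) (hu : ContDiff ℝ (m + 2) u) (hlim : Tendsto u (cocompact E) (𝓝 0))
    (h : ∀ x ≠ 0, ∃ c : ℝ, iteratedFDeriv ℝ (m + 2) u x =
      c • iteratedFDeriv ℝ (m + 2) (fun y => Real.log ‖y‖) x) : u 0 = 0 := by
  obtain ⟨L⟩ := exists_linearIsometry_complex hd
  have hg : u ∘ L = 0 := eq_zero_of_iteratedFDeriv_laplacian_eq_zero (hu.comp L.contDiff)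
    (iteratedFDeriv_laplacian_comp_eq_zero hu h L)
    (hlim.comp L.isometry.isClosedEmbedding.tendsto_cocompact)
  simpa using congrFun hg 0

end Rigidity

section StrictInequality

variable {E : Type*} [NormedAddCommGroup E] [InnerProductSpace ℝ E] [FiniteDimensional ℝ E]
  [MeasurableSpace E] [BorelSpace E] {μ : Measure E} [μ.IsAddHaarMeasure] {N : ℕ} {u : E → ℝ}
  {e : E}

theorem HasIntegrableDerivs.abs_apply_lt (hu : HasIntegrableDerivs N u μ) (hN : 2 ≤ N)
    (hd : finrank ℝ E = N) (he : ‖e‖ = 1) {y : E} (hy : u y ≠ 0) :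
    |u y| < (‖tensorCoords E N (iteratedFDeriv ℝ N (fun x => Real.log ‖x‖) e)‖ *
      μ.toSphere.real Set.univ)⁻¹ * ∫ x, ‖tensorCoords E N (iteratedFDeriv ℝ N u x)‖ ∂μ := by
  obtain ⟨m, rfl⟩ := Nat.exists_eq_add_of_le' hN
  have huy := hu.comp_add_right y
  have hint : ∫ x, ‖tensorCoords E (m + 2) (iteratedFDeriv ℝ (m + 2) (fun z => u (z + y)) x)‖ ∂μ =
      ∫ x, ‖tensorCoords E (m + 2) (iteratedFDeriv ℝ (m + 2) u x)‖ ∂μ := by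
    simp only [iteratedFDeriv_comp_add_right]
    exact integral_add_right_eq_self
      (fun x => ‖tensorCoords E (m + 2) (iteratedFDeriv ℝ (m + 2) u x)‖) y
  have hzero : u (0 + y) = u y := by rw [zero_add]
  rw [← hint, ← logTensor_of_norm_eq_one _ he, ← hzero]
  refine (huy.abs_apply_zero_le hd he).lt_of_ne fun heq => hy ?_
  rw [← hzero]
  exact apply_zero_eq_zero_of_iteratedFDeriv_eq_smul (hN.trans_eq hd.symm) huy.contDiff
    (huy.tendsto_cocompact_zero hd (by omega))
    fun _ => huy.exists_iteratedFDeriv_eq_smul_of_abs_apply_zero_eq hd he heq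

theorem statement9_general (hN : 2 ≤ N) (hd : finrank ℝ E = N) (hu : HasIntegrableDerivs N u μ)
    (hne : u ≠ 0) (he : ‖e‖ = 1) :
    ⨆ x, |u x| < (‖tensorCoords E N (iteratedFDeriv ℝ N (fun x => Real.log ‖x‖) e)‖ *
      μ.toSphere.real Set.univ)⁻¹ * ∫ x, ‖tensorCoords E N (iteratedFDeriv ℝ N u x)‖ ∂μ := by
  obtain ⟨y, hy, hmax⟩ := exists_forall_abs_le_of_tendsto_cocompact hu.contDiff.continuous
    (hu.tendsto_cocompact_zero hd (by omega)) hne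
  exact (ciSup_le hmax).trans_lt (hu.abs_apply_lt hN hd he hy)

end StrictInequality

theorem gradNorm_eq_norm_tensorCoords {N : ℕ} (m : ℕ) (u : EuclideanSpace ℝ (Fin N) → ℝ)
    (x : EuclideanSpace ℝ (Fin N)) : gradNorm N m u x =
      ‖tensorCoords (EuclideanSpace ℝ (Fin N)) m (iteratedFDeriv ℝ m u x)‖ := by
  rw [gradNorm, ← Real.sqrt_sq (norm_nonneg (tensorCoords _ m _)), ← frobeniusInner_self,
    frobeniusInner_eq_sum (EuclideanSpace.basisFun (Fin N) ℝ)]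
  simp only [mixedPartial, EuclideanSpace.basisFun_apply, sq]

theorem omegaSphere_eq_toSphere_real_univ (N : ℕ) : omegaSphere N =
    (volume : Measure (EuclideanSpace ℝ (Fin N))).toSphere.real Set.univ := by
  rw [omegaSphere, Measure.toSphere_real_apply_univ, finrank_euclideanSpace_fin]
  rfl

/-- for `N ≥ 2`, no nonzero `C^N` function with all partial derivatives up to
order `N` integrable attains equality: `‖u‖_∞ < (√(ℓ_N) ω_{N-1})⁻¹ ∫ |∇^N u|`. -/
theorem statement9 (N : ℕ) (hN : 2 ≤ N)
    (u : EuclideanSpace ℝ (Fin N) → ℝ)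
    (hu : ContDiff ℝ (N : ℕ∞) u) (hne : u ≠ 0)
    (hint : ∀ k ≤ N, Integrable (fun x => ‖iteratedFDeriv ℝ k u x‖)) :
    (⨆ x, |u x|) <
      (Real.sqrt (ell N (by omega)) * omegaSphere N)⁻¹ * ∫ x, gradNorm N N u x := by
  rw [omegaSphere_eq_toSphere_real_univ, ell, ← gradNorm]
  simp only [gradNorm_eq_norm_tensorCoords]
  exact statement9_general hN finrank_euclideanSpace_fin ⟨hu, hint _⟩ hne (by simp)
end
end

section
/- Let N ≥ 1, m ≥ 1, and let α = (α_1,…,α_N) be a multi-index with |α| = α_1 + ⋯ + α_N = m. Then there exist polynomials P^{(α)}_{m−2i} in N variables, for i = 0,…,⌊m/2⌋, each of which is either the zero polynomial or a homogeneous polynomial of degree m−2i with positive integer coefficients, such that for every f : ℝ → ℝ of class C^m and every x ∈ ℝ^N, the radial function u(x) = f(|x|²/2) satisfies ∂^m u / ∂x_1^{α_1}⋯∂x_N^{α_N} (x) = ∑_{i=0}^{⌊m/2⌋} f^{(m−i)}(|x|²/2) · P^{(α)}_{m−2i}(x_1,…,x_N). Moreover, when α = m·e_j is concentrated in a single coordinate,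 none of the polynomials P^{(α)}_{m−2i} is zero. -/
open MeasureTheory Metric Filter Matrix

noncomputable section

/-!
A derivative `∂_j` sends `f^{(k)}(|x|²/2) p(x)` to
`f^{(k+1)}(|x|²/2) x_j p(x) + f^{(k)}(|x|²/2) ∂_j p(x)`. Forgetting the order `k`, this is the
operator `p ↦ X_j p + ∂_j p`, and since operators with distinct `j` act on distinct variables,
applying them to `1` as prescribed by `α` yields `∏ j, H_{α j}(X_j)`, where `H_n` is the Hermite
polynomial `He_n` with all signs made positive. The order `k` can be recovered from the degree:
the coefficient of `f^{(m-i)}` is the homogeneous component of degree `m - 2i` of this product.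
-/

open MvPolynomial Finset

/-- The probabilists' Hermite polynomial `He_n` with all its signs made positive: the recursion is
that of `Polynomial.hermite` with `+` in place of `-`, so that the coefficients are natural
numbers. -/
def unsignedHermite : ℕ → Polynomial ℕ
  | 0 => 1
  | n + 1 => Polynomial.X * unsignedHermite n + Polynomial.derivative (unsignedHermite n)

namespace unsignedHermite

lemma coeff_succ_zero (n : ℕ) :
    (unsignedHermite (n + 1)).coeff 0 = (unsignedHermite n).coeff 1 := by
  simp [unsignedHermite, Polynomial.coeff_derivative]

lemma coeff_succ_succ (n d : ℕ) :
    (unsignedHermite (n + 1)).coeff (d + 1) =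
      (unsignedHermite n).coeff d + (unsignedHermite n).coeff (d + 2) * (d + 2) := by
  simp [unsignedHermite, Polynomial.coeff_derivative, add_assoc, one_add_one_eq_two]

lemma natDegree_le (n : ℕ) : (unsignedHermite n).natDegree ≤ n := by
  induction n with
  | zero => simp [unsignedHermite]
  | succ n ih =>
    refine Polynomial.natDegree_add_le_of_degree_le ?_ ?_
    · exact Polynomial.natDegree_mul_le.trans (by rw [Polynomial.natDegree_X]; omega)
    · exact (Polynomial.natDegree_derivative_le _).trans (by omega)

lemma coeff_pos (i d : ℕ) : 0 < (unsignedHermite (2 * i + d)).coeff d := by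
  induction i generalizing d with
  | zero =>
    induction d with
    | zero => simp [unsignedHermite]
    | succ d ih => rw [← add_assoc, coeff_succ_succ]; omega
  | succ i ih =>
    induction d with
    | zero =>
      rw [show 2 * (i + 1) + 0 = 2 * i + 1 + 1 by ring, coeff_succ_zero]
      exact ih 1
    | succ d ihd => rw [← add_assoc, coeff_succ_succ]; omega

end unsignedHermite

section MvPolynomialLemmas

variable {σ R : Type*} [CommSemiring R]

lemma totalDegree_aeval_X_le (j : σ) (p : Polynomial R) :
    (Polynomial.aeval (X j : MvPolynomial σ R) p).totalDegree ≤ p.natDegree := by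
  rw [Polynomial.aeval_eq_sum_range]
  refine totalDegree_finsetSum_le fun n hn => (totalDegree_smul_le _ _).trans ?_
  have hX := (isHomogeneous_X_pow (R := R) j n).totalDegree_le
  exact hX.trans (Nat.lt_succ_iff.mp (mem_range.mp hn))

lemma coeff_single_aeval_X (j : σ) (p : Polynomial R) (d : ℕ) :
    coeff (Finsupp.single j d) (Polynomial.aeval (X j : MvPolynomial σ R) p) = p.coeff d := by
  classical
  induction p using Polynomial.induction_on' with
  | add p q hp hq => rw [map_add, coeff_add, hp, hq, Polynomial.coeff_add]
  | monomial n a =>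
    simp [Polynomial.aeval_monomial, coeff_X_pow, Polynomial.coeff_monomial,
      (Finsupp.single_injective j).eq_iff]

lemma homogeneousComponent_succ_X_mul (d : ℕ) (j : σ) (p : MvPolynomial σ R) :
    homogeneousComponent (d + 1) (X j * p) = X j * homogeneousComponent d p := by
  classical
  ext e
  rw [coeff_homogeneousComponent, coeff_X_mul', coeff_X_mul', coeff_homogeneousComponent]
  by_cases he : j ∈ e.support
  · have hle : Finsupp.single j 1 ≤ e :=
      Finsupp.single_le_iff.mpr (Nat.one_le_iff_ne_zero.mpr (Finsupp.mem_support_iff.mp he))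
    have hdeg : (e - Finsupp.single j 1).degree + 1 = e.degree := by
      rw [← Finsupp.degree_single j 1, ← map_add, Finsupp.degree_single,
        tsub_add_cancel_of_le hle]
    simp only [he, if_true, ← hdeg, add_left_inj]
  · simp only [he, if_false, ite_self]

lemma homogeneousComponent_zero_X_mul (j : σ) (p : MvPolynomial σ R) :
    homogeneousComponent 0 (X j * p) = 0 := by
  simp [homogeneousComponent_zero, ← constantCoeff_eq]

lemma homogeneousComponent_pderiv (d : ℕ) (j : σ) (p : MvPolynomial σ R) :
    homogeneousComponent d (pderiv j p) = pderiv j (homogeneousComponent (d + 1) p) := by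
  ext e
  simp only [coeff_homogeneousComponent, coeff_pderiv, map_add, Finsupp.degree_single,
    add_left_inj, ite_mul, zero_mul]

end MvPolynomialLemmas

section RadialPolynomials

variable {ι : Type*} [Fintype ι]

lemma sum_add_single_one [DecidableEq ι] (α : ι → ℕ) (j : ι) :
    ∑ k, (α + Pi.single j 1 : ι → ℕ) k = ∑ k, α k + 1 := by
  simp [sum_add_distrib]

/-- The product `∏ j, H_{α j}(X_j)` of unsigned Hermite polynomials, one in each variable. -/
def hermiteProd (α : ι → ℕ) : MvPolynomial ι ℕ :=
  ∏ j, Polynomial.aeval (X j) (unsignedHermite (α j))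

lemma hermiteProd_add_single [DecidableEq ι] (α : ι → ℕ) (j : ι) :
    hermiteProd (α + Pi.single j 1) = X j * hermiteProd α + pderiv j (hermiteProd α) := by
  set H : ℕ → MvPolynomial ι ℕ := fun n => Polynomial.aeval (X j) (unsignedHermite n)
  set Q : MvPolynomial ι ℕ :=
    ∏ k ∈ univ.erase j, Polynomial.aeval (X k) (unsignedHermite (α k))
  have hprod : hermiteProd α = H (α j) * Q := (mul_prod_erase _ _ (mem_univ j)).symm
  have hprod_succ : hermiteProd (α + Pi.single j 1) = H (α j + 1) * Q := by
    rw [hermiteProd, ← mul_prod_erase _ _ (mem_univ j), Pi.add_apply, Pi.single_eq_same]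
    congr 1
    refine prod_congr rfl fun k hk => ?_
    rw [Pi.add_apply, Pi.single_eq_of_ne (ne_of_mem_erase hk), add_zero]
  have hH : H (α j + 1) = X j * H (α j) + pderiv j (H (α j)) := by
    simp [H, unsignedHermite, Derivation.map_aeval]
  have hQ : pderiv j Q = 0 := by
    refine prod_induction _ (pderiv j · = 0) (fun p q hp hq => ?_) pderiv_one fun k hk => ?_
    · rw [pderiv_mul, hp, hq, zero_mul, mul_zero, add_zero]
    · rw [Derivation.map_aeval, pderiv_X_of_ne (ne_of_mem_erase hk), smul_zero]
  rw [hprod_succ, hprod, hH, pderiv_mul, hQ]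
  ring

lemma hermiteProd_single [DecidableEq ι] (j : ι) (n : ℕ) :
    hermiteProd (Pi.single j n) = Polynomial.aeval (X j) (unsignedHermite n) := by
  rw [hermiteProd, prod_eq_single j, Pi.single_eq_same]
  · intro k _ hk
    rw [Pi.single_eq_of_ne hk, unsignedHermite, map_one]
  · simp

lemma totalDegree_hermiteProd_le (α : ι → ℕ) : (hermiteProd α).totalDegree ≤ ∑ j, α j :=
  (totalDegree_finsetProd _ _).trans <| sum_le_sum fun j _ =>
    (totalDegree_aeval_X_le j _).trans (unsignedHermite.natDegree_le _)

/-- The polynomial `P^{(α)}_{m-2i}`, where `m = |α|`: the homogeneous component of degree `m - 2i`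
of `hermiteProd α`. It is set to `0` when `m < 2i`, where `m - 2i` is truncated. -/
def radialPoly (α : ι → ℕ) (i : ℕ) : MvPolynomial ι ℕ :=
  if 2 * i ≤ ∑ j, α j then homogeneousComponent (∑ j, α j - 2 * i) (hermiteProd α) else 0

namespace radialPoly

lemma eq_zero_of_lt {α : ι → ℕ} {i : ℕ} (h : ∑ j, α j < 2 * i) : radialPoly α i = 0 :=
  if_neg h.not_ge

lemma isHomogeneous (α : ι → ℕ) (i : ℕ) :
    (radialPoly α i).IsHomogeneous (∑ j, α j - 2 * i) := by
  unfold radialPoly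
  split_ifs
  · exact homogeneousComponent_isHomogeneous _ _
  · exact isHomogeneous_zero _ _ _

lemma zero_zero : radialPoly (0 : ι → ℕ) 0 = 1 := by
  simp [radialPoly, hermiteProd, unsignedHermite, homogeneousComponent_zero]

variable [DecidableEq ι]

lemma add_single_zero (α : ι → ℕ) (j : ι) :
    radialPoly (α + Pi.single j 1) 0 = X j * radialPoly α 0 := by
  have hzero : homogeneousComponent (∑ k, α k + 1 + 1) (hermiteProd α) = 0 :=
    homogeneousComponent_eq_zero _ _ ((totalDegree_hermiteProd_le α).trans_lt (by omega))
  simp only [radialPoly, mul_zero, zero_le, if_true, Nat.sub_zero, sum_add_single_one,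
    hermiteProd_add_single, map_add, homogeneousComponent_succ_X_mul,
    homogeneousComponent_pderiv, hzero, map_zero, add_zero]

lemma add_single_succ (α : ι → ℕ) (j : ι) (i : ℕ) :
    radialPoly (α + Pi.single j 1) (i + 1) =
      X j * radialPoly α (i + 1) + pderiv j (radialPoly α i) := by
  simp only [radialPoly, sum_add_single_one, hermiteProd_add_single, map_add]
  generalize ∑ k, α k = m
  obtain h | rfl | rfl | h : m < 2 * i ∨ m = 2 * i ∨ m = 2 * i + 1 ∨ 2 * (i + 1) ≤ m := by omega
  · rw [if_neg (by omega), if_neg (by omega), if_neg (by omega), mul_zero, map_zero, add_zero]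
  · rw [if_neg (by omega), if_neg (by omega), if_pos le_rfl, Nat.sub_self,
      homogeneousComponent_zero, pderiv_C, mul_zero, add_zero]
  · rw [if_pos (by omega), if_neg (by omega), if_pos (by omega), homogeneousComponent_pderiv,
      show 2 * i + 1 + 1 - 2 * (i + 1) = 0 by omega, homogeneousComponent_zero_X_mul,
      show 2 * i + 1 - 2 * i = 0 + 1 by omega, mul_zero]
  · rw [if_pos (by omega), if_pos h, if_pos (by omega), homogeneousComponent_pderiv,
      show m + 1 - 2 * (i + 1) = m - 2 * (i + 1) + 1 by omega, homogeneousComponent_succ_X_mul,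
      show m - 2 * (i + 1) + 1 + 1 = m - 2 * i by omega]

lemma single_ne_zero (j : ι) {m i : ℕ} (h : 2 * i ≤ m) : radialPoly (Pi.single j m) i ≠ 0 := by
  obtain ⟨d, rfl⟩ := Nat.exists_eq_add_of_le h
  refine ne_zero_iff.mpr ⟨Finsupp.single j d, ?_⟩
  simpa [radialPoly, coeff_homogeneousComponent, hermiteProd_single, coeff_single_aeval_X] using
    (unsignedHermite.coeff_pos i d).ne'

lemma sum_antidiagonal_add_single {A : Type*} [CommSemiring A] (α : ι → ℕ) (j : ι)
    (F : ℕ → A) (x : ι → A) {m : ℕ} (hm : ∑ k, α k = m) :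
    ∑ p ∈ antidiagonal (m + 1), F p.2 * aeval x (radialPoly (α + Pi.single j 1) p.1) =
      ∑ p ∈ antidiagonal m, (F (p.2 + 1) * aeval x (X j * radialPoly α p.1) +
        F p.2 * aeval x (pderiv j (radialPoly α p.1))) := by
  have hlast : radialPoly α (m + 1) = 0 := eq_zero_of_lt (by omega)
  have hshift : ∑ p ∈ antidiagonal m, F (p.2 + 1) * aeval x (X j * radialPoly α p.1) =
      F (m + 1) * aeval x (X j * radialPoly α 0) +
        ∑ p ∈ antidiagonal m, F p.2 * aeval x (X j * radialPoly α (p.1 + 1)) := by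
    rw [← Nat.sum_antidiagonal_succ (f := fun p => F p.2 * aeval x (X j * radialPoly α p.1)),
      Nat.sum_antidiagonal_succ', hlast]
    simp
  rw [Nat.sum_antidiagonal_succ, sum_add_distrib, hshift, add_assoc, ← sum_add_distrib]
  simp only [add_single_zero, add_single_succ, map_add, mul_add]

end radialPoly

end RadialPolynomials

section IndexCount

variable {ι : Type*} [DecidableEq ι] {m : ℕ}

/-- The multi-index `α` of the partial derivative taken along the coordinates `idx 0, idx 1, …`. -/
def indexCount (idx : Fin m → ι) (j : ι) : ℕ := #{k | idx k = j}

lemma sum_indexCount [Fintype ι] (idx : Fin m → ι) : ∑ j, indexCount idx j = m := by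
  simpa [indexCount] using
    (card_eq_sum_card_fiberwise (f := idx) (s := univ) (t := univ) (by simp)).symm

lemma indexCount_succ (idx : Fin (m + 1) → ι) :
    indexCount idx = indexCount (Fin.tail idx) + Pi.single (idx 0) 1 := by
  ext j
  rw [indexCount, Fin.card_filter_univ_succ', add_comm, Pi.add_apply, Pi.single_apply]
  simp only [indexCount, Fin.tail, eq_comm]

end IndexCount

section Calculus

lemma hasLineDerivAt_aeval {ι R 𝕜 : Type*} [DecidableEq ι] [CommSemiring R]
    [NontriviallyNormedField 𝕜] [Algebra R 𝕜] (p : MvPolynomial ι R) (x : ι → 𝕜) (j : ι) :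
    HasLineDerivAt 𝕜 (fun y : ι → 𝕜 => aeval y p) (aeval x (pderiv j p)) x (Pi.single j 1) := by
  induction p using MvPolynomial.induction_on with
  | C a => simpa [HasLineDerivAt] using hasDerivAt_const (0 : 𝕜) (algebraMap R 𝕜 a)
  | add p q hp hq => simpa [HasLineDerivAt] using HasDerivAt.fun_add hp hq
  | mul_X p k hp =>
    have hX : HasDerivAt (fun t : 𝕜 => (x + t • Pi.single j 1 : ι → 𝕜) k)
        ((Pi.single j 1 : ι → 𝕜) k) 0 := by
      simpa using ((hasDerivAt_id (0 : 𝕜)).mul_const ((Pi.single j 1 : ι → 𝕜) k)).const_add (x k)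
    have hk : aeval x (pderiv j (X k : MvPolynomial ι R)) = (Pi.single j 1 : ι → 𝕜) k := by
      rcases eq_or_ne k j with rfl | hkj
      · rw [pderiv_X_self, map_one, Pi.single_eq_same]
      · rw [pderiv_X_of_ne hkj, map_zero, Pi.single_eq_of_ne hkj]
    rw [pderiv_mul, map_add, map_mul, map_mul, hk, aeval_X]
    simpa [HasLineDerivAt] using HasDerivAt.fun_mul hp hX

lemma hasLineDerivAt_norm_sq_div_two {E : Type*} [NormedAddCommGroup E] [InnerProductSpace ℝ E]
    (x v : E) : HasLineDerivAt ℝ (fun y => ‖y‖ ^ 2 / 2) (inner ℝ x v) x v := by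
  simp_rw [div_eq_mul_inv]
  convert ((hasStrictFDerivAt_norm_sq x).hasFDerivAt.mul_const (2⁻¹ : ℝ)).hasLineDerivAt v using 1
  simp

lemma hasLineDerivAt_iteratedFDeriv {𝕜 E F : Type*} [NontriviallyNormedField 𝕜]
    [NormedAddCommGroup E] [NormedSpace 𝕜 E] [NormedAddCommGroup F] [NormedSpace 𝕜 F]
    {m : ℕ} {u : E → F} (hu : ContDiff 𝕜 (m + 1 : ℕ) u) (x : E) (v : Fin (m + 1) → E) :
    HasLineDerivAt 𝕜 (fun y => iteratedFDeriv 𝕜 m u y (Fin.tail v))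
      (iteratedFDeriv 𝕜 (m + 1) u x v) x (v 0) := by
  have hdiff := hu.differentiable_iteratedFDeriv (m := m) (mod_cast m.lt_succ_self)
  exact ((hdiff x).hasFDerivAt.continuousMultilinear_apply_const (Fin.tail v)).hasLineDerivAt (v 0)

variable {ι : Type*} [DecidableEq ι] [Fintype ι]

lemma hasLineDerivAt_radial_mul_aeval {R : Type*} [CommSemiring R] [Algebra R ℝ]
    {g : ℝ → ℝ} {g' : ℝ} {x : EuclideanSpace ℝ ι} (hg : HasDerivAt g g' (‖x‖ ^ 2 / 2))
    (p : MvPolynomial ι R) (j : ι) :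
    HasLineDerivAt ℝ (fun y : EuclideanSpace ℝ ι => g (‖y‖ ^ 2 / 2) * aeval y.ofLp p)
      (g' * aeval x.ofLp (X j * p) + g (‖x‖ ^ 2 / 2) * aeval x.ofLp (pderiv j p)) x
      (EuclideanSpace.single j 1) := by
  have hr : HasLineDerivAt ℝ (fun y : EuclideanSpace ℝ ι => ‖y‖ ^ 2 / 2) (x j) x
      (EuclideanSpace.single j 1) := by
    simpa [EuclideanSpace.inner_single_right] using
      hasLineDerivAt_norm_sq_div_two x (EuclideanSpace.single j 1)
  have hp : HasLineDerivAt ℝ (fun y : EuclideanSpace ℝ ι => aeval y.ofLp p)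
      (aeval x.ofLp (pderiv j p)) x (EuclideanSpace.single j 1) :=
    hasLineDerivAt_aeval p x.ofLp j
  have hgr := hg.comp_of_eq 0 hr (by simp)
  refine (HasDerivAt.fun_mul hgr hp).congr_deriv ?_
  simp only [Function.comp_apply, zero_smul, add_zero, map_mul, aeval_X]
  ring

theorem iteratedFDeriv_radial_eq_sum_antidiagonal {m : ℕ} {f : ℝ → ℝ} (hf : ContDiff ℝ m f)
    (idx : Fin m → ι) (x : EuclideanSpace ℝ ι) :
    iteratedFDeriv ℝ m (fun y : EuclideanSpace ℝ ι => f (‖y‖ ^ 2 / 2)) x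
        (fun k => EuclideanSpace.single (idx k) 1) =
      ∑ p ∈ antidiagonal m,
        iteratedDeriv p.2 f (‖x‖ ^ 2 / 2) * aeval x.ofLp (radialPoly (indexCount idx) p.1) := by
  induction m generalizing x with
  | zero =>
    have hcount : indexCount idx = 0 := by ext; simp [indexCount]
    simp [hcount, radialPoly.zero_zero]
  | succ m ih =>
    have hu : ContDiff ℝ (m + 1 : ℕ) fun y : EuclideanSpace ℝ ι => f (‖y‖ ^ 2 / 2) :=
      hf.comp ((contDiff_norm_sq ℝ).div_const 2)
    have hderiv : ∀ k ≤ m, HasDerivAt (iteratedDeriv k f)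
        (iteratedDeriv (k + 1) f (‖x‖ ^ 2 / 2)) (‖x‖ ^ 2 / 2) := fun k hk => by
      rw [iteratedDeriv_succ]
      exact (hf.differentiable_iteratedDeriv k (mod_cast Nat.lt_succ_of_le hk) _).hasDerivAt
    have hleft := hasLineDerivAt_iteratedFDeriv hu x fun k => EuclideanSpace.single (idx k) 1
    have hright := HasDerivAt.fun_sum fun p (hp : p ∈ antidiagonal m) =>
      hasLineDerivAt_radial_mul_aeval (hderiv p.2 (mem_antidiagonal.mp hp ▸ Nat.le_add_left _ _))
        (radialPoly (indexCount (Fin.tail idx)) p.1) (idx 0)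
    rw [indexCount_succ]
    refine .trans ?_ (radialPoly.sum_antidiagonal_add_single _ (idx 0)
      (iteratedDeriv · f (‖x‖ ^ 2 / 2)) _ (sum_indexCount _)).symm
    refine hleft.unique (hright.congr_of_eventuallyEq (.of_forall fun t => ?_))
    exact ih (hf.of_le (mod_cast m.le_succ)) (Fin.tail idx) _

theorem iteratedFDeriv_radial_eq_sum_range {m : ℕ} {f : ℝ → ℝ} (hf : ContDiff ℝ m f)
    (idx : Fin m → ι) (x : EuclideanSpace ℝ ι) :
    iteratedFDeriv ℝ m (fun y : EuclideanSpace ℝ ι => f (‖y‖ ^ 2 / 2)) x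
        (fun k => EuclideanSpace.single (idx k) 1) =
      ∑ i ∈ range (m / 2 + 1),
        iteratedDeriv (m - i) f (‖x‖ ^ 2 / 2) * aeval x.ofLp (radialPoly (indexCount idx) i) := by
  rw [iteratedFDeriv_radial_eq_sum_antidiagonal hf, Nat.sum_antidiagonal_eq_sum_range_succ_mk]
  refine (sum_subset (range_subset_range.mpr (by omega)) fun i _ hi => ?_).symm
  have hlt : ∑ j, indexCount idx j < 2 * i := by
    rw [mem_range] at hi
    rw [sum_indexCount]
    omega
  rw [radialPoly.eq_zero_of_lt hlt, map_zero, mul_zero]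

end Calculus

/-- for each multi-index `α` with `|α| = m` there are polynomials
`P^{(α)}_{m-2i}`, `i = 0,…,⌊m/2⌋`, each either zero or homogeneous of degree `m-2i` with
positive integer coefficients, such that for every radial `u(x) = f(|x|²/2)` with `f ∈ C^m`,
`∂^m u/∂x^α (x) = ∑_i f^{(m-i)}(|x|²/2) P^{(α)}_{m-2i}(x)`; moreover if `α = m·e_j` then
none of the polynomials is zero. -/
theorem statement14 (N m : ℕ) (hN : 1 ≤ N) (hm : 1 ≤ m)
    (α : Fin N → ℕ) (hα : ∑ j, α j = m) :
    ∃ P : ℕ → MvPolynomial (Fin N) ℝ,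
      (∀ i ≤ m / 2, P i = 0 ∨
        ((P i).IsHomogeneous (m - 2 * i) ∧
          ∀ d ∈ (P i).support, ∃ n : ℕ, 0 < n ∧ MvPolynomial.coeff d (P i) = (n : ℝ))) ∧
      (∀ f : ℝ → ℝ, ContDiff ℝ (m : ℕ∞) f →
        ∀ x : EuclideanSpace ℝ (Fin N),
          ∀ idx : Fin m → Fin N,
            (∀ j : Fin N, (Finset.univ.filter fun k => idx k = j).card = α j) →
              mixedPartial N m (fun y => f (‖y‖ ^ 2 / 2)) idx x =
                ∑ i ∈ Finset.range (m / 2 + 1),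
                  iteratedDeriv (m - i) f (‖x‖ ^ 2 / 2) *
                    MvPolynomial.eval (fun j => x j) (P i)) ∧
      ((∃ j : Fin N, α = Pi.single j m) → ∀ i ≤ m / 2, P i ≠ 0) := by
  refine ⟨fun i => MvPolynomial.map (Nat.castRingHom ℝ) (radialPoly α i), fun i _ => .inr ⟨?_, ?_⟩,
    ?_, ?_⟩
  · exact hα ▸ (radialPoly.isHomogeneous α i).map _
  · intro d hd
    rw [mem_support_iff, coeff_map] at hd
    exact ⟨_, Nat.pos_of_ne_zero fun h => hd (by rw [h, map_zero]), coeff_map _ _ _⟩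
  · intro f hf x idx hidx
    obtain rfl : indexCount idx = α := funext hidx
    simpa only [mixedPartial, eval_map, aeval_def] using!
      iteratedFDeriv_radial_eq_sum_range hf idx x
  · rintro ⟨j, rfl⟩ i hi
    rw [Ne, map_eq_zero_iff _ (map_injective _ Nat.cast_injective)]
    exact radialPoly.single_ne_zero j (by omega)
end
end

section
/- Let N ≥ 2 and let u : ℝ^N → ℝ be a radial function of class C^N on ℝ^N (say u(x) = f(|x|²/2) for some f ∈ C^N((0,∞)) on ℝ^N∖{0}) such that u and |∇^N u| are Lebesgue integrable on ℝ^N. Suppose there exists a function a : (0,∞) → ℝ such that for almost every x ∈ ℝ^N∖{0} and every (i_1,…,i_N) ∈ {1,…,N}^N, ∂^N u/∂x_{i_1}⋯∂x_{i_N}(x) = a(|x|) · ∂^N log|x|/∂x_{i_1}⋯∂x_{i_N}(x), i.e. the tensor ∇^N u(x) is the scalar multiple a(|x|) of ∇^N log|x|. Then u is identically zero. -/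
open MeasureTheory Metric Filter Matrix

noncomputable section

/-!
At a point `x = r e` with `|e| = 1`, choose a unit vector `y` orthogonal to `e` and add the entries
of the tensor of `m`-th derivatives in the directions `(e, …, e, e, e)` and `(e, …, e, y, y)`.
For a radial function `φ (|x| ^ 2 / 2)` this partial trace is the `(m - 2)`-th derivative in `r` of
`r² φ'' + 2 φ'`, the Laplacian of the same profile in the plane. Since `log |z|` is harmonic
in the plane, the trace kills the right-hand side whatever the factor `a` is, so the planar
Laplacian of `u` is a polynomial in `r`. Integrating twice, `u = C log |x| + R (|x|)` with `R` a
polynomial: continuity at the origin forces `C = 0`, and integrability forces `R = 0`.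
-/

open Polynomial Set
open scoped Topology ENNReal

section PolynomialAntiderivative

lemma polynomial_derivative_surjective {K : Type*} [Field K] [CharZero K] :
    Function.Surjective (derivative : K[X] → K[X]) := by
  intro P
  induction P using Polynomial.induction_on' with
  | add p q hp hq =>
    obtain ⟨a, rfl⟩ := hp
    obtain ⟨b, rfl⟩ := hq
    exact ⟨a + b, derivative_add⟩
  | monomial n c =>
    refine ⟨monomial (n + 1) (c / (n + 1)), ?_⟩
    rw [derivative_monomial_succ, div_mul_cancel₀ _ n.cast_add_one_ne_zero]

variable {𝕜 : Type*} [RCLike 𝕜] {s : Set 𝕜} {g : 𝕜 → 𝕜}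

lemma exists_polynomial_eqOn_of_hasDerivAt (hs : IsOpen s) (hs' : IsPreconnected s) {P : 𝕜[X]}
    (hg : ∀ x ∈ s, HasDerivAt g (P.eval x) x) : ∃ Q : 𝕜[X], ∀ x ∈ s, g x = Q.eval x := by
  obtain ⟨Q, rfl⟩ := polynomial_derivative_surjective P
  have hsub : ∀ x ∈ s, HasDerivAt (fun y ↦ g y - Q.eval y) 0 x := fun x hx ↦
    ((hg x hx).sub (Q.hasDerivAt x)).congr_deriv (sub_self _)
  obtain ⟨c, hc⟩ := hs.exists_is_const_of_deriv_eq_zero hs'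
    (fun x hx ↦ (hsub x hx).differentiableAt.differentiableWithinAt) (fun x hx ↦ (hsub x hx).deriv)
  exact ⟨Q + C c, fun x hx ↦ by simp [← hc x hx]⟩

lemma exists_polynomial_eqOn_of_iteratedDeriv_eqOn_zero (hs : IsOpen s) (hs' : IsPreconnected s)
    {n : ℕ} (hg : ContDiffOn 𝕜 n g s) (h : EqOn (iteratedDeriv n g) 0 s) :
    ∃ Q : 𝕜[X], ∀ x ∈ s, g x = Q.eval x := by
  induction n generalizing g with
  | zero => exact ⟨0, fun x hx ↦ by simpa using h hx⟩
  | succ n ih =>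
    obtain ⟨P, hP⟩ := ih (hg.deriv_of_isOpen hs (by norm_cast)) (by rwa [← iteratedDeriv_succ'])
    refine exists_polynomial_eqOn_of_hasDerivAt hs hs' (P := P) fun x hx ↦ ?_
    exact ((hg.contDiffAt (hs.mem_nhds hx)).differentiableAt (by simp)).hasDerivAt.congr_deriv
      (hP x hx)

end PolynomialAntiderivative

section IteratedDerivativeOnRays

variable {𝕜 : Type*} [NontriviallyNormedField 𝕜] {E F : Type*} [NormedAddCommGroup E]
  [NormedSpace 𝕜 E] [NormedAddCommGroup F] [NormedSpace 𝕜 F]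

lemma iteratedFDeriv_smul_apply_const {n : ℕ} {G : E → F} {s : Set E} (hs : IsOpen s)
    (hG : ContDiffOn 𝕜 n G s) {e : E} {r : 𝕜} (hr : r • e ∈ s) :
    iteratedFDeriv 𝕜 n G (r • e) (fun _ ↦ e) = iteratedDeriv n (fun t : 𝕜 ↦ G (t • e)) r := by
  let L : 𝕜 →L[𝕜] E := .toSpanSingleton 𝕜 e
  have hL : IsOpen (L ⁻¹' s) := hs.preimage L.continuous
  have hcomp := L.iteratedFDerivWithin_comp_right hG hs.uniqueDiffOn hL.uniqueDiffOn
    (x := r) hr le_rfl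
  rw [iteratedFDerivWithin_of_isOpen n hL hr,
    iteratedFDerivWithin_of_isOpen (x := L r) n hs hr] at hcomp
  rw [iteratedDeriv_eq_iteratedFDeriv]
  change _ = iteratedFDeriv 𝕜 n (G ∘ L) r _
  rw [hcomp]
  simp [L]

lemma iteratedFDeriv_fderiv_eq_smul {n : ℕ} {G H : E → F} {x : E} {c : 𝕜}
    (h : iteratedFDeriv 𝕜 (n + 1) G x = c • iteratedFDeriv 𝕜 (n + 1) H x) :
    iteratedFDeriv 𝕜 n (fderiv 𝕜 G) x = c • iteratedFDeriv 𝕜 n (fderiv 𝕜 H) x := by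
  simp only [iteratedFDeriv_succ_eq_comp_right, Function.comp_apply, ← map_smul] at h
  exact LinearIsometryEquiv.injective _ h

lemma iteratedFDeriv_smul_apply_const_apply₂ {n : ℕ} {G : E → E →L[𝕜] E →L[𝕜] F} {s : Set E}
    (hs : IsOpen s) (hG : ContDiffOn 𝕜 n G s) {e : E} {r : 𝕜} (hr : r • e ∈ s) (v w : E) :
    iteratedFDeriv 𝕜 n G (r • e) (fun _ ↦ e) v w =
      iteratedDeriv n (fun t : 𝕜 ↦ G (t • e) v w) r := by
  let eval : (E →L[𝕜] E →L[𝕜] F) →L[𝕜] F := (.apply 𝕜 F w) ∘L (.apply 𝕜 (E →L[𝕜] F) v)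
  have hray := iteratedFDeriv_smul_apply_const hs (eval.contDiff.comp_contDiffOn hG) hr
  rwa [eval.iteratedFDeriv_comp_left (hG.contDiffAt (hs.mem_nhds hr)) le_rfl] at hray

end IteratedDerivativeOnRays

section Radial

lemma half_norm_sq_pos {E : Type*} [NormedAddCommGroup E] {x : E} (hx : x ≠ 0) :
    0 < ‖x‖ ^ 2 / 2 := by
  have := norm_pos_iff.2 hx
  positivity

lemma log_norm_eq {E : Type*} [NormedAddCommGroup E] {x : E} (hx : x ≠ 0) :
    Real.log ‖x‖ = (Real.log 2 + Real.log (‖x‖ ^ 2 / 2)) / 2 := by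
  rw [← Real.log_mul two_ne_zero (half_norm_sq_pos hx).ne', mul_div_cancel₀ _ two_ne_zero,
    Real.log_pow, Nat.cast_two, mul_div_cancel_left₀ _ two_ne_zero]

variable {E : Type*} [NormedAddCommGroup E] [InnerProductSpace ℝ E]

lemma hasFDerivAt_half_norm_sq (x : E) :
    HasFDerivAt (fun y : E ↦ ‖y‖ ^ 2 / 2) (innerSL ℝ x) x := by
  refine (((hasStrictFDerivAt_norm_sq x).hasFDerivAt).mul_const (2⁻¹ : ℝ)).congr_fderiv ?_
  ext y
  simp

lemma hasFDerivAt_comp_half_norm_sq {φ : ℝ → ℝ} (hφ : DifferentiableOn ℝ φ (Ioi 0)) {x : E}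
    (hx : x ≠ 0) :
    HasFDerivAt (fun y : E ↦ φ (‖y‖ ^ 2 / 2)) (deriv φ (‖x‖ ^ 2 / 2) • innerSL ℝ x) x :=
  (hφ.differentiableAt (Ioi_mem_nhds (half_norm_sq_pos hx))).hasDerivAt.comp_hasFDerivAt
    (h₂ := φ) x (hasFDerivAt_half_norm_sq x)

lemma contDiffOn_comp_half_norm_sq {n : WithTop ℕ∞} {φ : ℝ → ℝ} (hφ : ContDiffOn ℝ n φ (Ioi 0)) :
    ContDiffOn ℝ n (fun x : E ↦ φ (‖x‖ ^ 2 / 2)) {0}ᶜ :=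
  hφ.comp ((contDiff_norm_sq ℝ).div_const 2).contDiffOn fun _ hx ↦ half_norm_sq_pos hx

variable {h : E → ℝ} {φ : ℝ → ℝ}

lemma fderiv_fderiv_radial_apply (hφ : DifferentiableOn ℝ φ (Ioi 0))
    (hφ' : DifferentiableOn ℝ (deriv φ) (Ioi 0)) (hh : ∀ x ≠ 0, h x = φ (‖x‖ ^ 2 / 2)) {x : E}
    (hx : x ≠ 0) (v w : E) :
    fderiv ℝ (fderiv ℝ h) x v w =
      deriv (deriv φ) (‖x‖ ^ 2 / 2) * inner ℝ x v * inner ℝ x w +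
        deriv φ (‖x‖ ^ 2 / 2) * inner ℝ v w := by
  have hgrad : ∀ y ≠ 0, fderiv ℝ h y = deriv φ (‖y‖ ^ 2 / 2) • innerSL ℝ y := fun y hy ↦
    ((hasFDerivAt_comp_half_norm_sq hφ hy).congr_of_eventuallyEq
      ((isOpen_ne.eventually_mem hy).mono hh)).fderiv
  have hhess := ((hasFDerivAt_comp_half_norm_sq hφ' hx).smul
    (innerSL ℝ : E →L[ℝ] E →L[ℝ] ℝ).hasFDerivAt).congr_of_eventuallyEq
      ((isOpen_ne.eventually_mem hx).mono hgrad)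
  rw [hhess.fderiv]
  change deriv φ (‖x‖ ^ 2 / 2) * inner ℝ v w +
    deriv (deriv φ) (‖x‖ ^ 2 / 2) * inner ℝ x v * inner ℝ x w = _
  ring

/-- The radial Laplacian of the plane: the value at `|z| = r` of the Laplacian of
`z ↦ φ (|z| ^ 2 / 2)` on `ℝ²`. The profile `φ` is a function of `|z| ^ 2 / 2`, not of `|z|`. -/
def planarRadialLaplacian (φ : ℝ → ℝ) (r : ℝ) : ℝ :=
  r ^ 2 * deriv (deriv φ) (r ^ 2 / 2) + 2 * deriv φ (r ^ 2 / 2)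

lemma contDiffOn_planarRadialLaplacian {n : ℕ} (hφ : ContDiffOn ℝ (n + 2 : ℕ) φ (Ioi 0)) :
    ContDiffOn ℝ n (planarRadialLaplacian φ) (Ioi 0) := by
  have hφ₁ : ContDiffOn ℝ (n + 1 : ℕ) (deriv φ) (Ioi 0) :=
    hφ.deriv_of_isOpen isOpen_Ioi (by norm_cast)
  have hφ₂ : ContDiffOn ℝ n (deriv (deriv φ)) (Ioi 0) :=
    hφ₁.deriv_of_isOpen isOpen_Ioi (by norm_cast)
  have hcomp {ψ : ℝ → ℝ} (hψ : ContDiffOn ℝ n ψ (Ioi 0)) :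
      ContDiffOn ℝ n (fun r ↦ ψ (r ^ 2 / 2)) (Ioi 0) := by
    have hsub : Ioi (0 : ℝ) ⊆ {0}ᶜ := fun _ hr ↦ ne_of_gt hr
    simpa using (contDiffOn_comp_half_norm_sq hψ).mono hsub
  have hsq : ContDiffOn ℝ n (fun r : ℝ ↦ r ^ 2) (Ioi 0) := by fun_prop
  exact (hsq.mul (hcomp hφ₂)).add
    (contDiffOn_const.mul (hcomp (hφ₁.of_le (by exact_mod_cast n.le_succ))))

lemma planarRadialLaplacian_log {r : ℝ} (hr : r ≠ 0) :
    planarRadialLaplacian (fun t ↦ (Real.log 2 + Real.log t) / 2) r = 0 := by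
  have hderiv : deriv (fun t : ℝ ↦ (Real.log 2 + Real.log t) / 2) = fun t ↦ t⁻¹ / 2 := by
    ext t
    simp
  rw [planarRadialLaplacian, hderiv]
  simp only [deriv_div_const, deriv_inv', inv_div]
  field_simp
  ring

lemma fderiv_fderiv_radial_trace (hφ : DifferentiableOn ℝ φ (Ioi 0))
    (hφ' : DifferentiableOn ℝ (deriv φ) (Ioi 0)) (hh : ∀ x ≠ 0, h x = φ (‖x‖ ^ 2 / 2)) {e y : E}
    (he : ‖e‖ = 1) (hy : ‖y‖ = 1) (hey : inner ℝ e y = 0) {r : ℝ} (hr : 0 < r) :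
    fderiv ℝ (fderiv ℝ h) (r • e) e e + fderiv ℝ (fderiv ℝ h) (r • e) y y =
      planarRadialLaplacian φ r := by
  have hre : r • e ≠ 0 := smul_ne_zero hr.ne' (norm_ne_zero_iff.1 (he ▸ one_ne_zero))
  rw [fderiv_fderiv_radial_apply hφ hφ' hh hre, fderiv_fderiv_radial_apply hφ hφ' hh hre]
  simp only [inner_smul_left, hey, real_inner_self_eq_norm_sq, norm_smul, he, hy,
    Real.norm_eq_abs, abs_of_pos hr, planarRadialLaplacian, RCLike.conj_to_real]
  ring_nf

lemma iteratedFDeriv_fderiv_fderiv_radial_trace {n : ℕ} (hφ : ContDiffOn ℝ (n + 2 : ℕ) φ (Ioi 0))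
    (hh : ∀ x ≠ 0, h x = φ (‖x‖ ^ 2 / 2)) {e y : E} (he : ‖e‖ = 1) (hy : ‖y‖ = 1)
    (hey : inner ℝ e y = 0) {r : ℝ} (hr : 0 < r) :
    iteratedFDeriv ℝ n (fderiv ℝ (fderiv ℝ h)) (r • e) (fun _ ↦ e) e e +
        iteratedFDeriv ℝ n (fderiv ℝ (fderiv ℝ h)) (r • e) (fun _ ↦ e) y y =
      iteratedDeriv n (planarRadialLaplacian φ) r := by
  have hφ₁ : ContDiffOn ℝ (n + 1 : ℕ) (deriv φ) (Ioi 0) :=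
    hφ.deriv_of_isOpen isOpen_Ioi (by norm_cast)
  have hopen : IsOpen ({0}ᶜ : Set E) := isOpen_compl_singleton
  have hh₀ : ContDiffOn ℝ (n + 2 : ℕ) h {0}ᶜ := (contDiffOn_comp_half_norm_sq hφ).congr hh
  have hh₁ : ContDiffOn ℝ (n + 1 : ℕ) (fderiv ℝ h) {0}ᶜ :=
    hh₀.fderiv_of_isOpen hopen (by norm_cast)
  have hh₂ : ContDiffOn ℝ n (fderiv ℝ (fderiv ℝ h)) {0}ᶜ :=
    hh₁.fderiv_of_isOpen hopen (by norm_cast)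
  have hre : r • e ∈ ({0}ᶜ : Set E) := smul_ne_zero hr.ne' (norm_ne_zero_iff.1 (he ▸ one_ne_zero))
  have hray : ContDiffAt ℝ n (fun t : ℝ ↦ fderiv ℝ (fderiv ℝ h) (t • e)) r :=
    (hh₂.contDiffAt (hopen.mem_nhds hre)).comp r (by fun_prop)
  rw [iteratedFDeriv_smul_apply_const_apply₂ hopen hh₂ hre,
    iteratedFDeriv_smul_apply_const_apply₂ hopen hh₂ hre,
    ← iteratedDeriv_fun_add (by fun_prop) (by fun_prop)]
  refine Filter.EventuallyEq.iteratedDeriv_eq _ ((eventually_gt_nhds hr).mono fun t ht ↦ ?_)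
  exact fderiv_fderiv_radial_trace (hφ.differentiableOn (by simp)) (hφ₁.differentiableOn (by simp))
    hh he hy hey ht

lemma exists_norm_eq_one_inner_eq_zero (hE : 1 < Module.finrank ℝ E) (x : E) :
    ∃ y : E, ‖y‖ = 1 ∧ inner ℝ x y = 0 := by
  have hne : (ℝ ∙ x)ᗮ ≠ ⊥ := fun hbot ↦ by
    have hspan := finrank_span_le_card (R := ℝ) ({x} : Set E)
    rw [Submodule.orthogonal_eq_bot_iff.1 hbot, finrank_top, toFinset_singleton,
      Finset.card_singleton] at hspan
    exact hE.not_ge hspan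
  have := Submodule.nontrivial_iff_ne_bot.2 hne
  obtain ⟨y, hy⟩ := exists_norm_eq (ℝ ∙ x)ᗮ zero_le_one
  exact ⟨y, hy, Submodule.mem_orthogonal_singleton_iff_inner_right.1 y.2⟩

lemma iteratedDeriv_planarRadialLaplacian_eq_zero {n : ℕ} (hE : 1 < Module.finrank ℝ E)
    (hφ : ContDiffOn ℝ (n + 2 : ℕ) φ (Ioi 0)) (hh : ∀ x ≠ 0, h x = φ (‖x‖ ^ 2 / 2)) {x : E}
    (hx : x ≠ 0) {c : ℝ} (hc : iteratedFDeriv ℝ (n + 2) h x =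
      c • iteratedFDeriv ℝ (n + 2) (fun y ↦ Real.log ‖y‖) x) :
    iteratedDeriv n (planarRadialLaplacian φ) ‖x‖ = 0 := by
  have hr : 0 < ‖x‖ := norm_pos_iff.2 hx
  obtain ⟨y, hy, hxy⟩ := exists_norm_eq_one_inner_eq_zero hE x
  obtain ⟨e, he, hxe⟩ : ∃ e : E, ‖e‖ = 1 ∧ ‖x‖ • e = x :=
    ⟨‖x‖⁻¹ • x, norm_smul_inv_norm hx, smul_inv_smul₀ hr.ne' x⟩
  have hey : inner ℝ e y = 0 := by
    rw [← hxe, real_inner_smul_left] at hxy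
    exact (mul_eq_zero.1 hxy).resolve_left hr.ne'
  have hlog : ContDiffOn ℝ (n + 2 : ℕ) (fun t : ℝ ↦ (Real.log 2 + Real.log t) / 2) (Ioi 0) :=
    (contDiffOn_const.add (contDiffOn_id.log fun t ht ↦ ne_of_gt ht)).div_const 2
  have htrace := iteratedFDeriv_fderiv_fderiv_radial_trace hφ hh he hy hey hr
  have htrace_log := iteratedFDeriv_fderiv_fderiv_radial_trace hlog
    (fun _ ↦ log_norm_eq) he hy hey hr
  have hharmonic : planarRadialLaplacian (fun t ↦ (Real.log 2 + Real.log t) / 2) =ᶠ[𝓝 ‖x‖] 0 :=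
    (eventually_gt_nhds hr).mono fun _ ht ↦ planarRadialLaplacian_log ht.ne'
  rw [hxe] at htrace htrace_log
  rw [← htrace, iteratedFDeriv_fderiv_eq_smul (iteratedFDeriv_fderiv_eq_smul hc)]
  simp only [_root_.smul_apply, ← smul_add]
  rw [htrace_log, hharmonic.iteratedDeriv_eq]
  simp

/-- With `L` the planar radial Laplacian of `f`, the radial equation reads
`(r² f' (r² / 2))' = r L`, so `r² f' (r² / 2)` is a polynomial `Q` in `r`, and
`(f (r² / 2))' = Q / r`. -/
lemma exists_eq_log_add_polynomial {f : ℝ → ℝ} (hf : DifferentiableOn ℝ f (Ioi 0))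
    (hf' : DifferentiableOn ℝ (deriv f) (Ioi 0)) {P : ℝ[X]}
    (hP : ∀ r ∈ Ioi 0, planarRadialLaplacian f r = P.eval r) :
    ∃ (C : ℝ) (R : ℝ[X]), ∀ r > 0, f (r ^ 2 / 2) = C * Real.log r + R.eval r := by
  have hchain {g : ℝ → ℝ} (hg : DifferentiableOn ℝ g (Ioi 0)) {r : ℝ} (hr : 0 < r) :
      HasDerivAt (fun s ↦ g (s ^ 2 / 2)) (deriv g (r ^ 2 / 2) * r) r := by
    simpa using (hasFDerivAt_comp_half_norm_sq (E := ℝ) hg hr.ne').hasDerivAt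
  obtain ⟨Q, hQ⟩ := exists_polynomial_eqOn_of_hasDerivAt isOpen_Ioi isPreconnected_Ioi
    (g := fun r : ℝ ↦ r ^ 2 * deriv f (r ^ 2 / 2)) (P := X * P) fun r hr ↦ by
      refine ((hasDerivAt_pow 2 r).mul (hchain hf' hr)).congr_deriv ?_
      rw [eval_mul, eval_X, ← hP r hr, planarRadialLaplacian]
      ring
  obtain ⟨R, hR⟩ := exists_polynomial_eqOn_of_hasDerivAt isOpen_Ioi isPreconnected_Ioi
    (g := fun r : ℝ ↦ f (r ^ 2 / 2) - Q.coeff 0 * Real.log r) (P := Q.divX) fun r hr ↦ by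
      have hr₀ : r ≠ 0 := ne_of_gt hr
      refine ((hchain hf hr).sub ((Real.hasDerivAt_log hr₀).const_mul _)).congr_deriv ?_
      have hdiv : r ^ 2 * deriv f (r ^ 2 / 2) = Q.divX.eval r * r + Q.coeff 0 := by
        rw [hQ r hr]
        conv_lhs => rw [← divX_mul_X_add Q]
        simp only [eval_add, eval_mul, eval_X, eval_C]
      field_simp
      linear_combination hdiv
  exact ⟨Q.coeff 0, R, fun r hr ↦ by linarith [hR r hr]⟩

end Radial

section Vanishing

lemma eq_zero_of_eq_mul_log_norm_add {E : Type*} [NormedAddCommGroup E] [(𝓝[≠] (0 : E)).NeBot]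
    {u g : E → ℝ} {C : ℝ} (hu : ContinuousAt u 0) (hg : ContinuousAt g 0)
    (h : ∀ x ≠ 0, u x = C * Real.log ‖x‖ + g x) : C = 0 := by
  by_contra hC
  have hlog : Tendsto (fun x : E ↦ Real.log ‖x‖) (𝓝[≠] 0) atBot :=
    Real.tendsto_log_nhdsGT_zero.comp tendsto_norm_nhdsNE_zero
  refine not_tendsto_nhds_of_tendsto_atBot hlog ((u 0 - g 0) / C) ?_
  refine (((hu.sub hg).div_const C).mono_left nhdsWithin_le_nhds).congr' ?_
  filter_upwards [self_mem_nhdsWithin] with x hx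
  rw [Pi.sub_apply, h x hx, add_sub_cancel_right, mul_div_cancel_left₀ _ hC]

lemma frequently_cocompact_norm_lt_of_memLp {X F : Type*} [TopologicalSpace X] [MeasurableSpace X]
    [NormedAddCommGroup F] {μ : Measure X} [IsFiniteMeasureOnCompacts μ] (hμ : μ univ = ∞)
    {u : X → F} {p : ℝ≥0∞} (hp₀ : p ≠ 0) (hp : p ≠ ∞) (hu : MemLp u p μ) {c : ℝ} (hc : 0 < c) :
    ∃ᶠ x in cocompact X, ‖u x‖ < c := by
  intro hlarge
  obtain ⟨K, hK, hKu⟩ := mem_cocompact.1 hlarge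
  have hcover : univ ⊆ K ∪ {x | c ≤ ‖u x‖} := fun x _ ↦
    (em (x ∈ K)).imp_right fun hx ↦ not_lt.1 (hKu hx)
  have hsuper : μ {x | c ≤ ‖u x‖} < ∞ := by
    simpa using hu.meas_ge_lt_top' hp₀ hp (ε := ENNReal.ofReal c) (by simpa using hc)
  exact (measure_mono hcover).trans_lt (measure_union_lt_top hK.measure_lt_top hsuper) |>.ne hμ

lemma polynomial_eq_zero_of_memLp_norm {E : Type*} [NormedAddCommGroup E] [ProperSpace E]
    [MeasurableSpace E] {μ : Measure E} [IsFiniteMeasureOnCompacts μ] (hμ : μ univ = ∞)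
    {p : ℝ≥0∞} (hp₀ : p ≠ 0) (hp : p ≠ ∞) {R : ℝ[X]}
    (hR : MemLp (fun x : E ↦ R.eval ‖x‖) p μ) : R = 0 := by
  by_contra hne
  have hone : (fun r : ℝ ↦ (1 : ℝ[X]).eval r) =O[atTop] fun r ↦ R.eval r :=
    isBigO_atTop_of_degree_le _ _ (degree_one.trans_le (zero_le_degree_iff.2 hne))
  obtain ⟨c, hc, hbound⟩ := hone.exists_pos
  refine frequently_cocompact_norm_lt_of_memLp hμ hp₀ hp hR (inv_pos.2 hc) ?_
  filter_upwards [tendsto_norm_cocompact_atTop.eventually hbound.bound] with x hx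
  rw [not_lt, inv_le_iff_one_le_mul₀' hc]
  simpa using hx

end Vanishing

section Rigidity

variable {E : Type*} [NormedAddCommGroup E] [InnerProductSpace ℝ E] [MeasurableSpace E]
  [BorelSpace E] {μ : Measure E}

lemma eqOn_zero_of_ae_norm [Nontrivial E] [μ.IsOpenPosMeasure] {g : ℝ → ℝ}
    (hg : ContinuousOn g (Ioi 0)) (h : ∀ᵐ x ∂μ, x ≠ 0 → g ‖x‖ = 0) : EqOn g 0 (Ioi 0) := by
  have hopen : IsOpen ({0}ᶜ : Set E) := isOpen_compl_singleton
  have hnorm : EqOn (fun x : E ↦ g ‖x‖) 0 {0}ᶜ :=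
    Measure.eqOn_open_of_ae_eq ((ae_restrict_iff' hopen.measurableSet).2 h) hopen
      (hg.comp continuous_norm.continuousOn fun x hx ↦ norm_pos_iff.2 hx) continuousOn_const
  intro r hr
  obtain ⟨x, rfl⟩ := exists_norm_eq E (le_of_lt hr)
  exact hnorm (norm_pos_iff.1 hr)

theorem statement15_general [FiniteDimensional ℝ E] [μ.IsAddHaarMeasure]
    (hE : 2 ≤ Module.finrank ℝ E) {m : ℕ} (hm : 2 ≤ m) {u : E → ℝ} (hu : Continuous u)
    {f : ℝ → ℝ} (hf : ContDiffOn ℝ m f (Ioi 0)) (hrad : ∀ x ≠ 0, u x = f (‖x‖ ^ 2 / 2))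
    {p : ℝ≥0∞} (hp₀ : p ≠ 0) (hp : p ≠ ∞) (hint : MemLp u p μ) (a : E → ℝ)
    (ha : ∀ᵐ x ∂μ, x ≠ 0 →
      iteratedFDeriv ℝ m u x = a x • iteratedFDeriv ℝ m (fun y ↦ Real.log ‖y‖) x) :
    u = 0 := by
  have : Nontrivial E := Module.nontrivial_of_finrank_pos (R := ℝ) (by lia)
  obtain ⟨n, rfl⟩ := Nat.exists_eq_add_of_le' hm
  have hf₁ : ContDiffOn ℝ (n + 1 : ℕ) (deriv f) (Ioi 0) :=
    hf.deriv_of_isOpen isOpen_Ioi (by norm_cast)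
  have hL := contDiffOn_planarRadialLaplacian hf
  have hcont : ContinuousOn (iteratedDeriv n (planarRadialLaplacian f)) (Ioi 0) :=
    (hL.continuousOn_iteratedDerivWithin le_rfl isOpen_Ioi.uniqueDiffOn).congr
      (iteratedDerivWithin_of_isOpen isOpen_Ioi).symm
  have hzero : EqOn (iteratedDeriv n (planarRadialLaplacian f)) 0 (Ioi 0) :=
    eqOn_zero_of_ae_norm hcont <| ha.mono fun x hx hx₀ ↦
      iteratedDeriv_planarRadialLaplacian_eq_zero hE hf hrad hx₀ (hx hx₀)
  obtain ⟨P, hP⟩ :=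
    exists_polynomial_eqOn_of_iteratedDeriv_eqOn_zero isOpen_Ioi isPreconnected_Ioi hL hzero
  obtain ⟨C, R, hCR⟩ := exists_eq_log_add_polynomial (hf.differentiableOn (by simp))
    (hf₁.differentiableOn (by simp)) hP
  have huCR : ∀ x ≠ 0, u x = C * Real.log ‖x‖ + R.eval ‖x‖ := fun x hx ↦
    (hrad x hx).trans (hCR _ (norm_pos_iff.2 hx))
  have hR : Continuous fun x : E ↦ R.eval ‖x‖ := R.continuous.comp continuous_norm
  obtain rfl : C = 0 := eq_zero_of_eq_mul_log_norm_add hu.continuousAt hR.continuousAt huCR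
  obtain rfl : u = fun x ↦ R.eval ‖x‖ :=
    hu.ext_on (dense_compl_singleton 0) hR fun x hx ↦ by simpa using huCR x hx
  obtain rfl : R = 0 :=
    polynomial_eq_zero_of_memLp_norm (measure_univ_of_isAddLeftInvariant μ) hp₀ hp hint
  exact funext fun x ↦ eval_zero

end Rigidity

lemma iteratedFDeriv_eq_smul_of_mixedPartial {N m : ℕ} {u v : EuclideanSpace ℝ (Fin N) → ℝ}
    {x : EuclideanSpace ℝ (Fin N)} {c : ℝ}
    (h : ∀ i : Fin m → Fin N, mixedPartial N m u i x = c * mixedPartial N m v i x) :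
    iteratedFDeriv ℝ m u x = c • iteratedFDeriv ℝ m v x := by
  refine ContinuousMultilinearMap.toMultilinearMap_injective <| Module.Basis.ext_multilinear
    (fun _ ↦ (EuclideanSpace.basisFun (Fin N) ℝ).toBasis) fun i ↦ ?_
  simpa [mixedPartial] using h i

/-- if a radial `C^N` function `u` on `ℝ^N`, `N ≥ 2`, with `u` and `|∇^N u|`
integrable, satisfies `∇^N u(x) = a(|x|) ∇^N log|x|` a.e., then `u ≡ 0`. -/
theorem statement15 (N : ℕ) (hN : 2 ≤ N)
    (u : EuclideanSpace ℝ (Fin N) → ℝ) (hu : ContDiff ℝ (N : ℕ∞) u)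
    (f : ℝ → ℝ) (hf : ContDiffOn ℝ (N : ℕ∞) f (Set.Ioi 0))
    (hrad : ∀ x : EuclideanSpace ℝ (Fin N), x ≠ 0 → u x = f (‖x‖ ^ 2 / 2))
    (hint : Integrable u) (hint' : Integrable (fun x => gradNorm N N u x))
    (a : ℝ → ℝ)
    (ha : ∀ᵐ x : EuclideanSpace ℝ (Fin N), x ≠ 0 →
      ∀ i : Fin N → Fin N,
        mixedPartial N N u i x = a ‖x‖ * mixedPartial N N (logNorm N) i x) :
    u = 0 := by
  exact statement15_general (by simpa using hN) hN hu.continuous (by exact_mod_cast hf) hrad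
    one_ne_zero ENNReal.one_ne_top (memLp_one_iff_integrable.2 hint) (fun x ↦ a ‖x‖)
    (ha.mono fun _ hx hx₀ ↦ iteratedFDeriv_eq_smul_of_mixedPartial (hx hx₀))
end
end
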